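/- arXiv:math/0505563 — 3 statements merged into one kernel-verified Lean document; each statement's English description precedes it below -/
import Mathlib

section
/- For all positive integers n, k, r with r ≥ 2 and n ≥ rk, the chromatic number of the Kneser r-hypergraph K_{n,k}^r equals ⌈(n − rk + r)/(r − 1)⌉. That is, the minimal number m of colors such that there exists a coloring c of the k-element subsets of {1,…,n} with m colors for which no r pairwise disjoint k-element subsets all receive the same color, equals ⌈(n − rk + r)/(r − 1)⌉. -/
namespace AFL

open Finsupp

section chains

variable (p : ℕ) {α β : Type*}

/-- Chains: formal combinations of lists. -/
abbrev Ch (α : Type*) := List α →₀ ZMod p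

noncomputable def cns (a : α) : Ch p α →ₗ[ZMod p] Ch p α :=
  Finsupp.lmapDomain _ _ (List.cons a)

noncomputable def mp (f : α → β) : Ch p α →ₗ[ZMod p] Ch p β :=
  Finsupp.lmapDomain _ _ (List.map f)

noncomputable def bdL : List α → Ch p α
  | [] => 0
  | a :: x => single x 1 - cns p a (bdL x)

noncomputable def bd : Ch p α →ₗ[ZMod p] Ch p α :=
  Finsupp.linearCombination (ZMod p) (bdL p)

noncomputable def hL (u : α → α) : List α → Ch p α
  | [] => 0
  | a :: x => single (a :: u a :: x.map u) 1 - cns p a (hL u x)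

noncomputable def hh (u : α → α) : Ch p α →ₗ[ZMod p] Ch p α :=
  Finsupp.linearCombination (ZMod p) (hL p u)

noncomputable def fill (u : α → α) (v : α) : Ch p α →ₗ[ZMod p] Ch p α :=
  cns p v ∘ₗ mp p u - hh p u

@[simp] lemma cns_single (a : α) (x : List α) (c : ZMod p) :
    cns p a (single x c) = single (a :: x) c := by
  simp [cns, Finsupp.lmapDomain_apply]

@[simp] lemma mp_single (f : α → β) (x : List α) (c : ZMod p) :
    mp p f (single x c) = single (x.map f) c := by
  simp [mp, Finsupp.lmapDomain_apply]

@[simp] lemma bd_single (x : List α) : bd p (single x 1) = bdL p x := by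
  simp [bd]

@[simp] lemma hh_single (u : α → α) (x : List α) : hh p u (single x 1) = hL p u x := by
  simp [hh]

lemma ext1 {M : Type*} [AddCommGroup M] [Module (ZMod p) M] {f g : Ch p α →ₗ[ZMod p] M}
    (h : ∀ x, f (single x 1) = g (single x 1)) : f = g := by
  apply Finsupp.lhom_ext'
  intro a
  apply LinearMap.ext_ring
  simpa using h a

lemma bd_cns (a : α) (x : Ch p α) : bd p (cns p a x) = x - cns p a (bd p x) := by
  have : (bd p ∘ₗ cns p a : Ch p α →ₗ[ZMod p] Ch p α) = LinearMap.id - cns p a ∘ₗ bd p := by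
    apply ext1; intro x; simp [bdL]
  exact LinearMap.congr_fun this x

lemma hh_cns (u : α → α) (a : α) (x : Ch p α) :
    hh p u (cns p a x) = cns p a (cns p (u a) (mp p u x)) - cns p a (hh p u x) := by
  have : (hh p u ∘ₗ cns p a : Ch p α →ₗ[ZMod p] Ch p α) =
      cns p a ∘ₗ cns p (u a) ∘ₗ mp p u - cns p a ∘ₗ hh p u := by
    apply ext1; intro x; simp [hL]
  exact LinearMap.congr_fun this x

lemma mp_cns (f : α → β) (a : α) (x : Ch p α) :
    mp p f (cns p a x) = cns p (f a) (mp p f x) := by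
  have : (mp p f ∘ₗ cns p a : Ch p α →ₗ[ZMod p] Ch p β) = cns p (f a) ∘ₗ mp p f := by
    apply ext1; intro x; simp
  exact LinearMap.congr_fun this x

lemma bd_bdL (x : List α) : bd p (bdL p x) = 0 := by
  induction x with
  | nil => simp [bdL]
  | cons a x ih => simp [bdL, bd_cns, ih]

lemma bd_bd (x : Ch p α) : bd p (bd p x) = 0 := by
  have : (bd p ∘ₗ bd p : Ch p α →ₗ[ZMod p] Ch p α) = 0 := by
    apply ext1; intro x; simp [bd_bdL]
  exact LinearMap.congr_fun this x

lemma mp_bdL (f : α → β) (x : List α) : mp p f (bdL p x) = bdL p (x.map f) := by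
  induction x with
  | nil => simp [bdL]
  | cons a x ih => simp [bdL, mp_cns, ih]

lemma mp_bd (f : α → β) (x : Ch p α) : mp p f (bd p x) = bd p (mp p f x) := by
  have : (mp p f ∘ₗ bd p : Ch p α →ₗ[ZMod p] Ch p β) = bd p ∘ₗ mp p f := by
    apply ext1; intro x; simp [mp_bdL]
  exact LinearMap.congr_fun this x

lemma bd_hL (u : α → α) (x : List α) :
    bd p (hL p u x) + hh p u (bdL p x) = single (x.map u) 1 - single x 1 := by
  induction x with
  | nil => simp [hL, bdL]
  | cons a x ih =>
    have h1 := congrArg (cns p a) ih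
    simp only [map_add, map_sub, cns_single] at h1
    simp only [hL, bdL, map_sub, bd_single, hh_single, bd_cns, hh_cns, List.map_cons, mp_bdL,
      cns_single]
    have h2 : cns p a (bd p (hL p u x)) = single (a :: x.map u) 1 - single (a :: x) 1
        - cns p a (hh p u (bdL p x)) := by rw [← h1]; abel
    rw [h2]
    abel

lemma bd_fill (u : α → α) (v : α) (x : Ch p α) :
    bd p (fill p u v x) = x - fill p u v (bd p x) := by
  have : (bd p ∘ₗ fill p u v : Ch p α →ₗ[ZMod p] Ch p α)
      = LinearMap.id - fill p u v ∘ₗ bd p := by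
    apply ext1; intro x
    have h := bd_hL p u x
    have h2 : bd p (hL p u x) = single (x.map u) 1 - single x 1 - hh p u (bdL p x) := by
      rw [← h]; abel
    simp only [fill, LinearMap.comp_apply, LinearMap.sub_apply, map_sub, mp_single, cns_single,
      hh_single, bd_single, h2, bdL, mp_bdL, LinearMap.id_apply]
    abel
  exact LinearMap.congr_fun this x

/-- Span of a set of lists. -/
noncomputable def Sp (S : Set (List α)) : Submodule (ZMod p) (Ch p α) :=
  Submodule.span (ZMod p) ((fun l => single l 1) '' S)

lemma mem_Sp {S : Set (List α)} {l : List α} (h : l ∈ S) : (single l 1 : Ch p α) ∈ Sp p S :=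
  Submodule.subset_span ⟨l, h, rfl⟩

lemma Sp_map {M : Type*} [AddCommGroup M] [Module (ZMod p) M] {S : Set (List α)}
    (L : Ch p α →ₗ[ZMod p] M) (W : Submodule (ZMod p) M)
    (h : ∀ l ∈ S, L (single l 1) ∈ W) {x : Ch p α} (hx : x ∈ Sp p S) : L x ∈ W := by
  have : Sp p S ≤ W.comap L := by
    apply Submodule.span_le.2
    rintro _ ⟨l, hl, rfl⟩
    exact h l hl
  exact this hx

lemma Sp_eq {M : Type*} [AddCommGroup M] [Module (ZMod p) M] {S : Set (List α)}
    (L L' : Ch p α →ₗ[ZMod p] M)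
    (h : ∀ l ∈ S, L (single l 1) = L' (single l 1)) {x : Ch p α} (hx : x ∈ Sp p S) :
    L x = L' x := by
  have := Sp_map p (S := S) (L - L') ⊥ (by intro l hl; simp [h l hl]) hx
  simpa [sub_eq_zero] using this

/-- The degenerate lists. -/
def dg (α : Type*) : Set (List α) := {l | ¬ l.IsChain (· ≠ ·)}

lemma cns_dg (a : α) {x : Ch p α} (hx : x ∈ Sp p (dg α)) : cns p a x ∈ Sp p (dg α) := by
  refine Sp_map p _ _ ?_ hx
  intro l hl
  rw [cns_single]
  apply mem_Sp
  intro h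
  exact hl h.tail

lemma bdL_dg (l : List α) (hl : l ∈ dg α) : bdL p l ∈ Sp p (dg α) := by
  induction l with
  | nil => simp [bdL]
  | cons a x ih =>
    by_cases hx : x ∈ dg α
    · exact Submodule.sub_mem _ (mem_Sp p hx) (cns_dg p a (ih hx))
    · cases x with
      | nil => simp [dg] at hl
      | cons b y =>
        have hab : a = b := by
          by_contra hne
          apply hl
          simp only [dg, Set.mem_ofPred_eq, not_not] at hx
          exact List.IsChain.cons_cons hne hx
        subst hab
        have : bdL p (a :: a :: y) = cns p a (cns p a (bdL p y)) := by
          simp [bdL]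
        rw [this]
        have h2 : cns p a ∘ₗ cns p a ∘ₗ (LinearMap.id : Ch p α →ₗ[ZMod p] Ch p α) =
          cns p a ∘ₗ cns p a := rfl
        have : ∀ z : Ch p α, (cns p a ∘ₗ cns p a) z ∈ Sp p (dg α) := by
          intro z
          refine Sp_map p (S := Set.univ) _ _ ?_ ?_
          · intro l _
            simp only [LinearMap.comp_apply, cns_single]
            apply mem_Sp
            intro h
            simp at h
          · induction z using Finsupp.induction_linear with
            | zero => simp
            | add f g hf hg => exact Submodule.add_mem _ hf hg
            | single l c =>
              have : (single l c : Ch p α) = c • single l 1 := by simp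
              rw [this]
              exact Submodule.smul_mem _ _ (mem_Sp p (Set.mem_univ l))
        exact this _

end chains

section cochains

variable (p : ℕ) [Fact p.Prime]

/-- shift on target -/
def tg (x : ZMod p) : ZMod p := x + 1

lemma tg_iter (t : ℕ) (x : ZMod p) : (tg p)^[t] x = x + t := by
  induction t generalizing x with
  | zero => simp
  | succ t ih => rw [Function.iterate_succ_apply, ih, tg]; push_cast; ring

/-- The operator `N`. -/
noncomputable def NN {α : Type*} (s : α → α) : Ch p α →ₗ[ZMod p] Ch p α :=
  ∑ t ∈ Finset.range p, mp p (s^[t])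

noncomputable def DD {α : Type*} (s : α → α) : Ch p α →ₗ[ZMod p] Ch p α :=
  mp p s - LinearMap.id

lemma mp_mp {α β γ : Type*} (f : β → γ) (g : α → β) (x : Ch p α) :
    mp p f (mp p g x) = mp p (f ∘ g) x := by
  have : (mp p f ∘ₗ mp p g : Ch p α →ₗ[ZMod p] Ch p γ) = mp p (f ∘ g) := by
    apply ext1; intro x; simp
  exact LinearMap.congr_fun this x

lemma mp_id {α : Type*} (x : Ch p α) : mp p (id : α → α) x = x := by
  have : (mp p (id : α → α) : Ch p α →ₗ[ZMod p] Ch p α) = LinearMap.id := by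
    apply ext1; intro x; simp
  exact LinearMap.congr_fun this x

lemma tele {α : Type*} (s : α → α) (hs : s^[p] = id) (x : Ch p α) :
    ∑ t ∈ Finset.range p, mp p (s^[t+1]) x - ∑ t ∈ Finset.range p, mp p (s^[t]) x = 0 := by
  rw [← Finset.sum_sub_distrib, Finset.sum_range_sub (fun t => mp p (s^[t]) x), hs]
  simp

lemma ND {α : Type*} (s : α → α) (hs : s^[p] = id) (x : Ch p α) : NN p s (DD p s x) = 0 := by
  rw [← tele p s hs x]
  simp [NN, DD, mp_mp, Finset.sum_sub_distrib, LinearMap.sum_apply, Function.iterate_succ]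

lemma DN {α : Type*} (s : α → α) (hs : s^[p] = id) (x : Ch p α) : DD p s (NN p s x) = 0 := by
  rw [← tele p s hs x]
  simp only [NN, DD, mp_mp, LinearMap.sum_apply, Function.iterate_succ', LinearMap.sub_apply,
    map_sum, LinearMap.id_apply, Finset.sum_sub_distrib]

lemma bd_D {α : Type*} (s : α → α) (x : Ch p α) : bd p (DD p s x) = DD p s (bd p x) := by
  simp [DD, mp_bd]

lemma bd_N {α : Type*} (s : α → α) (x : Ch p α) : bd p (NN p s x) = NN p s (bd p x) := by
  simp [NN, mp_bd, LinearMap.sum_apply]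

lemma map_dg {α : Type*} (f : α → α) (hf : f.Injective) (l : List α) :
    l.map f ∈ dg α ↔ l ∈ dg α := by
  simp [dg, List.isChain_map, hf.eq_iff]

lemma etaN (ψ : Ch p (ZMod p) →ₗ[ZMod p] ZMod p) (h0 : ψ (single [] 1) = 0)
    (hD : ∀ x, ψ (DD p (tg p) x) = 0) (hdg : ∀ l ∈ dg (ZMod p), ψ (single l 1) = 0) :
    ∃ η : Ch p (ZMod p) →ₗ[ZMod p] ZMod p, (∀ x, η (NN p (tg p) x) = ψ x) ∧
      ∀ l ∈ dg (ZMod p), η (single l 1) = 0 := by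
  have hp : p.Prime := Fact.out
  have hinv : ∀ (t : ℕ) (l : List (ZMod p)),
      ψ (single (l.map ((tg p)^[t])) 1) = ψ (single l 1) := by
    intro t l
    induction t with
    | zero => simp
    | succ t ih =>
      have := hD (single (l.map ((tg p)^[t])) 1)
      simp only [DD, LinearMap.sub_apply, mp_single, map_sub, LinearMap.id_apply, List.map_map,
        sub_eq_zero, ← Function.iterate_succ'] at this
      rw [this, ih]
  let e : List (ZMod p) → ZMod p := fun l => if l.head? = some 0 then ψ (single l 1) else 0
  refine ⟨Finsupp.linearCombination (ZMod p) e, ?_, ?_⟩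
  · intro x
    have : (Finsupp.linearCombination (ZMod p) e ∘ₗ NN p (tg p)) = ψ := by
      apply ext1
      intro l
      cases l with
      | nil => simp [NN, h0, e]
      | cons a x =>
        simp only [LinearMap.comp_apply, NN, LinearMap.sum_apply, mp_single, map_sum,
          linearCombination_single, one_smul, e, hinv]
        rw [← Finset.sum_filter, Finset.sum_const]
        have : (Finset.range p).filter
            (fun t => ((a :: x).map ((tg p)^[t])).head? = some 0) = {(-a).val} := by
          ext t
          simp only [Finset.mem_filter, Finset.mem_range, List.map_cons, List.head?_cons,
            Option.some.injEq, tg_iter, Finset.mem_singleton]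
          constructor
          · rintro ⟨h1, h2⟩
            have : (-a) = (t : ZMod p) := by linear_combination -h2
            rw [this, ZMod.val_cast_of_lt h1]
          · rintro rfl
            exact ⟨ZMod.val_lt _, by simp⟩
        rw [this]
        simp
    exact LinearMap.congr_fun this x
  · intro l hl
    simp [e, hdg l hl]

lemma etaD (ψ : Ch p (ZMod p) →ₗ[ZMod p] ZMod p) (h0 : ψ (single [] 1) = 0)
    (hN : ∀ x, ψ (NN p (tg p) x) = 0) (hdg : ∀ l ∈ dg (ZMod p), ψ (single l 1) = 0) :
    ∃ η : Ch p (ZMod p) →ₗ[ZMod p] ZMod p, (∀ x, η (DD p (tg p) x) = ψ x) ∧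
      ∀ l ∈ dg (ZMod p), η (single l 1) = 0 := by
  have hp : p.Prime := Fact.out
  let e : List (ZMod p) → ZMod p := fun l => match l with
    | [] => 0
    | a :: x => ∑ t ∈ Finset.range a.val,
        ψ (single ((a :: x).map (fun y => y + ((t : ZMod p) - a))) 1)
  refine ⟨Finsupp.linearCombination (ZMod p) e, ?_, ?_⟩
  · intro x
    have : (Finsupp.linearCombination (ZMod p) e ∘ₗ DD p (tg p)) = ψ := by
      apply ext1
      intro l
      cases l with
      | nil => simp [DD, h0]
      | cons a x =>
        have key : ∀ F : ℕ → ZMod p, ∑ t ∈ Finset.range p, F t = 0 →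
            ∑ t ∈ Finset.range (a + 1).val, F t - ∑ t ∈ Finset.range a.val, F t = F a.val := by
          intro F hF
          by_cases h : a.val + 1 < p
          · have : (a + 1).val = a.val + 1 := by
              rw [ZMod.val_add_of_lt]
              · rw [ZMod.val_one]
              · rwa [ZMod.val_one]
            rw [this, Finset.sum_range_succ]; ring
          · have h1 := ZMod.val_lt a
            have h2 : p = a.val + 1 := by omega
            have h3 : a + 1 = 0 := by
              have : ((a.val + 1 : ℕ) : ZMod p) = 0 := by rw [← h2]; simp
              simpa using this
            rw [h3, ZMod.val_zero]
            have hF : ∑ t ∈ Finset.range (a.val + 1), F t = 0 := by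
              convert hF using 2
              rw [← h2]
            rw [Finset.sum_range_succ] at hF
            simp
            linear_combination -hF
        have hk := key (fun t => ψ (single ((a :: x).map (fun y => y + ((t : ZMod p) - a))) 1)) (by
          have := hN (single ((a :: x).map (fun y => y - a)) 1)
          simp only [NN, LinearMap.sum_apply, mp_single, map_sum, List.map_map] at this
          rw [← this]
          apply Finset.sum_congr rfl
          intro t _
          congr 3
          funext y
          simp [tg_iter]; ring)
        simp only [LinearMap.comp_apply, DD, LinearMap.sub_apply, map_sub, mp_single,
          linearCombination_single, one_smul, LinearMap.id_apply, List.map_cons, e]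
        simp only [List.map_cons] at hk
        simp only [tg, List.map_map]
        convert hk using 3
        · congr 3
          · ring
          · apply congrFun
            congr 1
            funext y
            simp [tg]; ring
        · simp
    exact LinearMap.congr_fun this x
  · intro l hl
    cases l with
    | nil => simp [e]
    | cons a x =>
      simp only [linearCombination_single, one_smul, e]
      apply Finset.sum_eq_zero
      intro t _
      apply hdg
      exact (map_dg _ (add_left_injective _) _).2 hl

end cochains

section tucker

set_option linter.unusedSectionVars false

variable (p : ℕ) [Fact p.Prime]

/-- good partial functions -/
def gd (n : ℕ) (A : Finset (ℕ × ZMod p)) : Prop :=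
  A.Nonempty ∧ (∀ a ∈ A, ∀ b ∈ A, a.1 = b.1 → a = b) ∧ ∀ a ∈ A, a.1 < n

/-- the shift -/
def sh (A : Finset (ℕ × ZMod p)) : Finset (ℕ × ZMod p) :=
  A.image (fun a => (a.1, a.2 + 1))

lemma sh_iter (t : ℕ) (A : Finset (ℕ × ZMod p)) :
    (sh p)^[t] A = A.image (fun a => (a.1, a.2 + (t : ZMod p))) := by
  induction t generalizing A with
  | zero => simp
  | succ t ih =>
    rw [Function.iterate_succ_apply, ih, sh, Finset.image_image]
    congr 1
    funext a
    simp only [Function.comp_apply, Nat.cast_succ]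
    congr 1
    ring

lemma sh_p : (sh p)^[p] = id := by
  funext A
  rw [sh_iter]
  simp

lemma tg_p : (tg p)^[p] = id := by
  funext A
  rw [tg_iter]
  simp

lemma gd_sh {n : ℕ} {A : Finset (ℕ × ZMod p)} (h : gd p n A) : gd p n (sh p A) := by
  obtain ⟨h1, h2, h3⟩ := h
  refine ⟨h1.image _, ?_, ?_⟩
  · intro a ha b hb hab
    simp only [sh, Finset.mem_image] at ha hb
    obtain ⟨a', ha', rfl⟩ := ha
    obtain ⟨b', hb', rfl⟩ := hb
    have := h2 a' ha' b' hb' hab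
    rw [this]
  · intro a ha
    simp only [sh, Finset.mem_image] at ha
    obtain ⟨a', ha', rfl⟩ := ha
    exact h3 a' ha'

lemma gd_mono {n m : ℕ} (hnm : n ≤ m) {A : Finset (ℕ × ZMod p)} (h : gd p n A) : gd p m A :=
  ⟨h.1, h.2.1, fun a ha => lt_of_lt_of_le (h.2.2 a ha) hnm⟩

lemma gd_insert {n : ℕ} {A : Finset (ℕ × ZMod p)} (h : gd p n A) :
    gd p (n + 1) (insert (n, 0) A) := by
  obtain ⟨h1, h2, h3⟩ := h
  refine ⟨Finset.insert_nonempty _ _, ?_, ?_⟩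
  · intro a ha b hb hab
    rw [Finset.mem_insert] at ha hb
    rcases ha with rfl | ha <;> rcases hb with rfl | hb
    · rfl
    · have := h3 b hb; simp at hab; omega
    · have := h3 a ha; simp at hab; omega
    · exact h2 a ha b hb hab
  · intro a ha
    rw [Finset.mem_insert] at ha
    rcases ha with rfl | ha
    · simp
    · have := h3 a ha; omega

/-- good lists -/
def GoodL (B : Finset (ℕ × ZMod p)) (L n : ℕ) : Set (List (Finset (ℕ × ZMod p))) :=
  {x | x.length = L ∧ x.Pairwise (· ⊆ ·) ∧ ∀ A ∈ x, gd p n A ∧ B ⊆ A}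

lemma hL_GoodL (n : ℕ) (x : List (Finset (ℕ × ZMod p))) : ∀ (B : Finset (ℕ × ZMod p)) (L : ℕ),
    x ∈ GoodL p B L n → hL p (fun A => insert (n, 0) A) x ∈ Sp p (GoodL p B (L + 1) (n + 1)) := by
  induction x with
  | nil => intro B L _; simp [hL]
  | cons a x ih =>
    rintro B L ⟨h1, h2, h3⟩
    rw [List.pairwise_cons] at h2
    obtain ⟨h2, h2'⟩ := h2
    have ha := h3 a (by simp)
    have hx : x ∈ GoodL p a x.length n :=
      ⟨rfl, h2', fun A hA => ⟨(h3 A (by simp [hA])).1, h2 A hA⟩⟩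
    have h1' : x.length + 1 = L := by simpa using h1
    rw [hL]
    apply Submodule.sub_mem
    · apply mem_Sp
      refine ⟨by simp [h1'], ?_, ?_⟩
      · rw [List.pairwise_cons, List.pairwise_cons]
        refine ⟨?_, ?_, ?_⟩
        · intro A hA
          simp only [List.mem_cons, List.mem_map] at hA
          rcases hA with rfl | ⟨A', hA', rfl⟩
          · exact Finset.subset_insert _ _
          · exact (h2 A' hA').trans (Finset.subset_insert _ _)
        · intro A hA
          simp only [List.mem_map] at hA
          obtain ⟨A', hA', rfl⟩ := hA
          exact Finset.insert_subset_insert _ (h2 A' hA')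
        · rw [List.pairwise_map]
          exact h2'.imp (fun h => Finset.insert_subset_insert _ h)
      · intro A hA
        simp only [List.mem_cons, List.mem_map] at hA
        rcases hA with rfl | rfl | ⟨A', hA', rfl⟩
        · exact ⟨gd_mono p (Nat.le_succ n) ha.1, ha.2⟩
        · exact ⟨gd_insert p ha.1, ha.2.trans (Finset.subset_insert _ _)⟩
        · have := h3 A' (by simp [hA'])
          exact ⟨gd_insert p this.1, this.2.trans (Finset.subset_insert _ _)⟩
    · refine Sp_map p _ _ ?_ (ih a _ hx)
      rintro l ⟨g1, g2, g3⟩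
      rw [cns_single]
      apply mem_Sp
      refine ⟨by simp [g1, h1'], ?_, ?_⟩
      · rw [List.pairwise_cons]
        exact ⟨fun A hA => (g3 A hA).2, g2⟩
      · intro A hA
        rw [List.mem_cons] at hA
        rcases hA with rfl | hA
        · exact ⟨gd_mono p (Nat.le_succ n) ha.1, ha.2⟩
        · exact ⟨(g3 A hA).1, ha.2.trans (g3 A hA).2⟩

lemma fill_GoodL (n L : ℕ) {c : Ch p (Finset (ℕ × ZMod p))} (hc : c ∈ Sp p (GoodL p ∅ L n)) :
    fill p (fun A => insert (n, 0) A) {(n, 0)} c ∈ Sp p (GoodL p ∅ (L + 1) (n + 1)) := by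
  refine Sp_map p _ _ ?_ hc
  rintro x hx
  have hx' := hx
  obtain ⟨h1, h2, h3⟩ := hx
  simp only [fill, LinearMap.sub_apply, LinearMap.comp_apply, mp_single, cns_single, hh_single]
  refine Submodule.sub_mem _ ?_ (hL_GoodL p n x _ _ hx')
  apply mem_Sp
  refine ⟨by simp [h1], ?_, ?_⟩
  · rw [List.pairwise_cons]
    constructor
    · intro A hA
      simp only [List.mem_map] at hA
      obtain ⟨A', hA', rfl⟩ := hA
      simp
    · rw [List.pairwise_map]
      exact h2.imp (fun h => Finset.insert_subset_insert _ h)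
  · intro A hA
    simp only [List.mem_cons, List.mem_map] at hA
    rcases hA with rfl | ⟨A', hA', rfl⟩
    · refine ⟨⟨by simp, ?_, ?_⟩, by simp⟩
      · intro a ha b hb _
        rw [Finset.mem_singleton] at ha hb
        rw [ha, hb]
      · intro a ha
        rw [Finset.mem_singleton] at ha
        rw [ha]; simp
    · exact ⟨gd_insert p (h3 A' hA').1, by simp⟩

lemma mp_sh_GoodL (n L t : ℕ) {c : Ch p (Finset (ℕ × ZMod p))} (hc : c ∈ Sp p (GoodL p ∅ L n)) :
    mp p ((sh p)^[t]) c ∈ Sp p (GoodL p ∅ L n) := by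
  have one : ∀ c ∈ Sp p (GoodL p ∅ L n), mp p (sh p) c ∈ Sp p (GoodL p ∅ L n) := by
    intro c hc
    refine Sp_map p _ _ ?_ hc
    rintro x ⟨h1, h2, h3⟩
    rw [mp_single]
    apply mem_Sp
    refine ⟨by simp [h1], ?_, ?_⟩
    · rw [List.pairwise_map]
      exact h2.imp (fun h => Finset.image_subset_image h)
    · intro A hA
      simp only [List.mem_map] at hA
      obtain ⟨A', hA', rfl⟩ := hA
      exact ⟨gd_sh p (h3 A' hA').1, by simp⟩
  induction t generalizing c with
  | zero => simpa [mp_id] using hc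
  | succ t ih =>
    rw [Function.iterate_succ, ← mp_mp]
    exact ih (one c hc)

variable (lam : Finset (ℕ × ZMod p) → ZMod p)

lemma mp_lam (n L t : ℕ) (heq : ∀ A, gd p n A → lam (sh p A) = lam A + 1)
    {c : Ch p (Finset (ℕ × ZMod p))} (hc : c ∈ Sp p (GoodL p ∅ L n)) :
    mp p lam (mp p ((sh p)^[t]) c) = mp p ((tg p)^[t]) (mp p lam c) := by
  refine Sp_eq p (mp p lam ∘ₗ mp p ((sh p)^[t])) (mp p ((tg p)^[t]) ∘ₗ mp p lam) ?_ hc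
  rintro x ⟨-, -, h3⟩
  simp only [LinearMap.comp_apply, mp_single, List.map_map]
  congr 1
  apply List.map_congr_left
  intro A hA
  have gen : ∀ A, gd p n A → lam ((sh p)^[t] A) = (tg p)^[t] (lam A) := by
    clear hA h3
    induction t with
    | zero => simp
    | succ t ih =>
      intro A hA
      rw [Function.iterate_succ_apply, Function.iterate_succ_apply, ih _ (gd_sh p hA), heq A hA]
      rfl
  exact gen A (h3 A hA).1

/-- The statement carried by the induction. -/
def Claim (n j : ℕ) (T : ∀ {α : Type}, (α → α) → Ch p α →ₗ[ZMod p] Ch p α)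
    (T' : ∀ {α : Type}, (α → α) → Ch p α →ₗ[ZMod p] Ch p α) : Prop :=
  ∃ c ∈ Sp p (GoodL p ∅ j j), ∃ ψ : Ch p (ZMod p) →ₗ[ZMod p] ZMod p,
    bd p (T (sh p) c) = 0 ∧ (∀ x, ψ (bd p x) = 0) ∧ (∀ x, ψ (T' (tg p) x) = 0) ∧
    (∀ l ∈ dg (ZMod p), ψ (single l 1) = 0) ∧ ψ (single [] 1) = 0 ∧ ψ (mp p lam c) = 1

lemma claim_step (n j : ℕ) (T : ∀ {α : Type}, (α → α) → Ch p α →ₗ[ZMod p] Ch p α)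
    (T' : ∀ {α : Type}, (α → α) → Ch p α →ₗ[ZMod p] Ch p α)
    (hTT : ∀ x, T' (sh p) (T (sh p) x) = 0)
    (hbT : ∀ x, bd p (T (tg p) x) = T (tg p) (bd p x))
    (hbT' : ∀ x, bd p (T' (sh p) x) = T' (sh p) (bd p x))
    (hTG : ∀ c ∈ Sp p (GoodL p ∅ j j), T (sh p) c ∈ Sp p (GoodL p ∅ j j))
    (hTl : ∀ c ∈ Sp p (GoodL p ∅ j j), mp p lam (T (sh p) c) = T (tg p) (mp p lam c))
    (heta : ∀ ψ : Ch p (ZMod p) →ₗ[ZMod p] ZMod p, ψ (single [] 1) = 0 →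
      (∀ x, ψ (T' (tg p) x) = 0) → (∀ l ∈ dg (ZMod p), ψ (single l 1) = 0) →
      ∃ η : Ch p (ZMod p) →ₗ[ZMod p] ZMod p, (∀ x, η (T (tg p) x) = ψ x) ∧
      ∀ l ∈ dg (ZMod p), η (single l 1) = 0)
    (h : Claim p lam n j T T') : Claim p lam n (j + 1) T' T := by
  obtain ⟨c, hc, ψ, h1, h2, h3, h4, h5, h6⟩ := h
  obtain ⟨η, e1, e2⟩ := heta ψ h5 h3 h4
  have hb : bd p (fill p (fun A => insert (j, 0) A) {(j, 0)} (T (sh p) c)) = T (sh p) c := by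
    rw [bd_fill, h1]; simp
  refine ⟨fill p (fun A => insert (j, 0) A) {(j, 0)} (T (sh p) c), fill_GoodL p j j (hTG c hc),
    η ∘ₗ bd p, ?_, ?_, ?_, ?_, ?_, ?_⟩
  · rw [hbT', hb, hTT]
  · intro x; simp [bd_bd]
  · intro x
    rw [LinearMap.comp_apply, hbT, e1, h2]
  · intro l hl
    rw [LinearMap.comp_apply, bd_single]
    have := Sp_map p η ⊥ (by intro l hl; simp [e2 l hl]) (bdL_dg p l hl)
    simpa using this
  · simp [bdL]
  · rw [LinearMap.comp_apply, ← mp_bd, hb, hTl c hc, e1, h6]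

lemma claim_base (n : ℕ) : Claim p lam n 1 (DD p) (NN p) := by
  have hp : p.Prime := Fact.out
  refine ⟨single [{(0, 0)}] 1, ?_, Finsupp.linearCombination (ZMod p)
    (fun l => if l.length = 1 then 1 else 0), ?_, ?_, ?_, ?_, ?_, ?_⟩
  · apply mem_Sp
    refine ⟨rfl, by simp, ?_⟩
    intro A hA
    simp only [List.mem_singleton] at hA
    subst hA
    refine ⟨⟨by simp, by simp, by simp⟩, by simp⟩
  · simp [DD, bdL]
  · intro x
    have : (Finsupp.linearCombination (ZMod p)
      (fun l : List (ZMod p) => if l.length = 1 then (1 : ZMod p) else 0)) ∘ₗ bd p = 0 := by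
      apply ext1
      intro l
      match l with
      | [] => simp [bdL]
      | [a] => simp [bdL]
      | [a, b] => simp [bdL]
      | a :: b :: c :: x =>
        rw [LinearMap.comp_apply, bd_single, bdL, bdL, bdL]
        have : ∀ z : Ch p (ZMod p), (Finsupp.linearCombination (ZMod p)
          (fun l : List (ZMod p) => if l.length = 1 then (1 : ZMod p) else 0))
            (cns p a (cns p b z)) = 0 := by
          intro z
          have : (Finsupp.linearCombination (ZMod p)
            (fun l : List (ZMod p) => if l.length = 1 then (1 : ZMod p) else 0)) ∘ₗ
            cns p a ∘ₗ cns p b = 0 := by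
            apply ext1; intro l; simp
          exact LinearMap.congr_fun this z
        simp [this]
    exact LinearMap.congr_fun this x
  · intro x
    have : (Finsupp.linearCombination (ZMod p)
      (fun l : List (ZMod p) => if l.length = 1 then (1 : ZMod p) else 0)) ∘ₗ NN p (tg p) = 0 := by
      apply ext1
      intro l
      simp [NN]
    exact LinearMap.congr_fun this x
  · intro l hl
    match l with
    | [] => simp
    | [a] => simp [dg] at hl
    | a :: b :: x => simp
  · simp
  · simp

lemma claim_all (n j : ℕ) (hj : j < n) (heq : ∀ A, gd p n A → lam (sh p A) = lam A + 1) :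
    Claim p lam n (j + 1) (DD p) (NN p) ∨ Claim p lam n (j + 1) (NN p) (DD p) := by
  induction j with
  | zero => exact Or.inl (claim_base p lam n)
  | succ j ih =>
    have heq' : ∀ A, gd p (j+1) A → lam (sh p A) = lam A + 1 :=
      fun A hA => heq A (gd_mono p hj.le hA)
    rcases ih (by omega) with h | h
    · right
      refine claim_step p lam n (j + 1) (DD p) (NN p) (ND p _ (sh_p p)) (bd_D p _) (bd_N p _)
        ?_ ?_ (fun ψ h0 h1 h2 => etaD p ψ h0 h1 h2) h
      · intro c hc
        exact Submodule.sub_mem _ (mp_sh_GoodL p _ _ 1 hc) hc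
      · intro c hc
        have := mp_lam p lam _ _ 1 heq' hc
        simp only [Function.iterate_one] at this
        simp [DD, this]
    · left
      refine claim_step p lam n (j + 1) (NN p) (DD p) (DN p _ (sh_p p)) (bd_N p _) (bd_D p _)
        ?_ ?_ (fun ψ h0 h1 h2 => etaN p ψ h0 h1 h2) h
      · intro c hc
        rw [NN, LinearMap.sum_apply]
        exact Submodule.sum_mem _ (fun t _ => mp_sh_GoodL p _ _ t hc)
      · intro c hc
        rw [NN, NN, LinearMap.sum_apply, LinearMap.sum_apply, map_sum]
        exact Finset.sum_congr rfl (fun t _ => mp_lam p lam _ _ t heq' hc)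

lemma long_chain (n : ℕ) (rho : Finset (ℕ × ZMod p) → ℕ)
    (hmono : ∀ A B, gd p n A → gd p n B → A ⊆ B → rho A ≤ rho B)
    (hsame : ∀ A B, gd p n A → gd p n B → A ⊆ B → rho A = rho B → lam A = lam B)
    (x : List (Finset (ℕ × ZMod p))) : ∀ (a : Finset (ℕ × ZMod p)),
    (∀ A ∈ a :: x, gd p n A) → (a :: x).Pairwise (· ⊆ ·) →
    ((a :: x).map lam).IsChain (· ≠ ·) → ∃ A ∈ a :: x, rho a + x.length ≤ rho A := by
  induction x with
  | nil => intro a _ _ _; exact ⟨a, by simp, by simp⟩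
  | cons b x ih =>
    intro a h1 h2 h3
    rw [List.pairwise_cons] at h2
    simp only [List.map_cons, List.isChain_cons_cons] at h3
    obtain ⟨A, hA, hle⟩ := ih b (fun A hA => h1 A (List.mem_cons_of_mem _ hA)) h2.2
      (by simpa using h3.2)
    refine ⟨A, List.mem_cons_of_mem _ hA, ?_⟩
    have ga := h1 a (by simp)
    have gb := h1 b (by simp)
    have hab := h2.1 b (by simp)
    have k1 := hmono a b ga gb hab
    have k2 : rho a ≠ rho b := fun h => h3.1 (hsame a b ga gb hab h)
    simp only [List.length_cons]
    omega

theorem tucker (n m : ℕ) (rho : Finset (ℕ × ZMod p) → ℕ)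
    (heq : ∀ A, gd p n A → lam (sh p A) = lam A + 1)
    (hmono : ∀ A B, gd p n A → gd p n B → A ⊆ B → rho A ≤ rho B)
    (hsame : ∀ A B, gd p n A → gd p n B → A ⊆ B → rho A = rho B → lam A = lam B)
    (hlt : ∀ A, gd p n A → rho A < m) : n ≤ m := by
  by_contra hnm
  obtain ⟨j, rfl⟩ : ∃ j, n = j + 1 := ⟨n - 1, by omega⟩
  have key : ∃ c ∈ Sp p (GoodL p ∅ (j + 1) (j + 1)), ∃ ψ : Ch p (ZMod p) →ₗ[ZMod p] ZMod p,
      (∀ l ∈ dg (ZMod p), ψ (single l 1) = 0) ∧ ψ (mp p lam c) = 1 := by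
    rcases claim_all p lam (j + 1) j (by omega) heq with h | h
    · obtain ⟨c, hc, ψ, h1, h2, h3, h4, h5, h6⟩ := h
      exact ⟨c, hc, ψ, h4, h6⟩
    · obtain ⟨c, hc, ψ, h1, h2, h3, h4, h5, h6⟩ := h
      exact ⟨c, hc, ψ, h4, h6⟩
  obtain ⟨c, hc, ψ, h4, h6⟩ := key
  have : (ψ ∘ₗ mp p lam) c = (0 : Ch p (Finset (ℕ × ZMod p)) →ₗ[ZMod p] ZMod p) c := by
    refine Sp_eq p _ _ ?_ hc
    rintro x ⟨g1, g2, g3⟩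
    rw [LinearMap.comp_apply, mp_single, LinearMap.zero_apply]
    apply h4
    intro hch
    cases x with
    | nil => simp at g1
    | cons a x =>
      obtain ⟨A, hA, hle⟩ := long_chain p lam (j + 1) rho hmono hsame x a
        (fun A hA => (g3 A hA).1) g2 hch
      have := hlt A (g3 A hA).1
      simp at g1
      omega
  rw [LinearMap.comp_apply, h6] at this
  simp at this

end tucker

section kneser

set_option linter.unusedSectionVars false

variable (p : ℕ) [Fact p.Prime]

def slice (S : Finset (ℕ × ZMod p)) (i : ℕ) : Finset (ℕ × ZMod p) := S.filter (fun a => a.1 = i)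

lemma sh_inj : Function.Injective (fun a : ℕ × ZMod p => (a.1, a.2 + 1)) := by
  rintro ⟨a, b⟩ ⟨c, d⟩ h
  simpa using h

lemma slice_sh (S : Finset (ℕ × ZMod p)) (i : ℕ) : slice p (sh p S) i = sh p (slice p S i) := by
  simp only [slice, sh, Finset.filter_image]

lemma card_sh (S : Finset (ℕ × ZMod p)) : (sh p S).card = S.card :=
  Finset.card_image_of_injective _ (sh_inj p)

noncomputable def i0 (S : Finset (ℕ × ZMod p)) : ℕ :=
  sInf {i | 0 < (slice p S i).card ∧ (slice p S i).card < p}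

noncomputable def sg (S : Finset (ℕ × ZMod p)) : ZMod p :=
  (∑ a ∈ slice p S (i0 p S), a.2) / ((slice p S (i0 p S)).card : ZMod p)

lemma sg_sh (S : Finset (ℕ × ZMod p))
    (h : ∃ i, 0 < (slice p S i).card ∧ (slice p S i).card < p) :
    sg p (sh p S) = sg p S + 1 := by
  have h1 : i0 p (sh p S) = i0 p S := by
    simp only [i0, slice_sh, card_sh]
  have h2 : 0 < (slice p S (i0 p S)).card ∧ (slice p S (i0 p S)).card < p :=
    Nat.sInf_mem (s := {i | 0 < (slice p S i).card ∧ (slice p S i).card < p}) h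
  have h3 : ((slice p S (i0 p S)).card : ZMod p) ≠ 0 := by
    intro h
    rw [ZMod.natCast_eq_zero_iff] at h
    have := Nat.le_of_dvd h2.1 h
    omega
  have h4 : ∑ a ∈ sh p (slice p S (i0 p S)), a.2
      = ∑ a ∈ slice p S (i0 p S), a.2 + (slice p S (i0 p S)).card := by
    rw [sh, Finset.sum_image (fun a _ b _ hab => sh_inj p hab), Finset.sum_add_distrib]
    simp
  simp only [sg, h1, slice_sh, card_sh, h4]
  field_simp

/-- The lower bound statement. -/
def LB (r : ℕ) : Prop := ∀ (k m : ℕ) (V : Finset ℕ) (c : Finset ℕ → ℕ), 0 < k →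
  m * (r - 1) + r * (k - 1) + 1 ≤ V.card → (∀ s ⊆ V, s.card = k → c s < m) →
  ∃ f : Fin r → Finset ℕ, (∀ i j, i ≠ j → Disjoint (f i) (f j)) ∧
    (∀ i, f i ⊆ V ∧ (f i).card = k) ∧ ∃ col, ∀ i, c (f i) = col

def part (e : ℕ → ℕ) (A : Finset (ℕ × ZMod p)) (g : ZMod p) : Finset ℕ :=
  (A.filter (fun a => a.2 = g)).image (fun a => e a.1)

open Classical in
noncomputable def SS (e : ℕ → ℕ) (c : Finset ℕ → ℕ) (k m : ℕ) (A : Finset (ℕ × ZMod p)) :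
    Finset (ℕ × ZMod p) :=
  (Finset.range m ×ˢ Finset.univ).filter
    (fun a => ∃ s ⊆ part p e A a.2, s.card = k ∧ c s = a.1)

def small (k : ℕ) (A : Finset (ℕ × ZMod p)) : Prop :=
  ∀ g, (A.filter (fun a => a.2 = g)).card ≤ k - 1

lemma filter_sh (A : Finset (ℕ × ZMod p)) (g : ZMod p) :
    (sh p A).filter (fun a => a.2 = g) = sh p (A.filter (fun a => a.2 = g - 1)) := by
  simp only [sh, Finset.filter_image, eq_sub_iff_add_eq]

lemma part_sh (e : ℕ → ℕ) (A : Finset (ℕ × ZMod p)) (g : ZMod p) :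
    part p e (sh p A) g = part p e A (g - 1) := by
  rw [part, filter_sh, sh, Finset.image_image]
  rfl

lemma small_sh (k : ℕ) (A : Finset (ℕ × ZMod p)) : small p k (sh p A) ↔ small p k A := by
  simp only [small, filter_sh, card_sh]
  constructor
  · intro h g
    simpa using h (g + 1)
  · intro h g
    exact h _

lemma SS_sh (e : ℕ → ℕ) (c : Finset ℕ → ℕ) (k m : ℕ) (A : Finset (ℕ × ZMod p)) :
    SS p e c k m (sh p A) = sh p (SS p e c k m A) := by
  ext ⟨i, g⟩
  rw [SS]
  simp only [part_sh]
  simp only [SS, sh, Finset.mem_filter, Finset.mem_product, Finset.mem_range,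
    Finset.mem_univ, and_true, Finset.mem_image, Prod.mk.injEq, Prod.exists]
  constructor
  · rintro ⟨h1, h2⟩
    exact ⟨i, g - 1, ⟨h1, h2⟩, rfl, by ring⟩
  · rintro ⟨i', g', ⟨h1, h2⟩, rfl, rfl⟩
    exact ⟨h1, by simpa using h2⟩

lemma part_mono (e : ℕ → ℕ) {A B : Finset (ℕ × ZMod p)} (h : A ⊆ B) (g : ZMod p) :
    part p e A g ⊆ part p e B g :=
  Finset.image_subset_image (Finset.filter_subset_filter _ h)

lemma SS_mono (e : ℕ → ℕ) (c : Finset ℕ → ℕ) (k m : ℕ) {A B : Finset (ℕ × ZMod p)} (h : A ⊆ B) :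
    SS p e c k m A ⊆ SS p e c k m B := by
  intro a ha
  simp only [SS, Finset.mem_filter] at ha ⊢
  obtain ⟨h1, s, h2, h3⟩ := ha
  exact ⟨h1, s, h2.trans (part_mono p e h _), h3⟩

lemma small_mono (k : ℕ) {A B : Finset (ℕ × ZMod p)} (h : A ⊆ B) (hB : small p k B) :
    small p k A := fun g =>
  (Finset.card_le_card (Finset.filter_subset_filter _ h)).trans (hB g)

lemma LB_prime : LB p := by
  classical
  have hp : p.Prime := Fact.out
  have hp2 := hp.two_le
  intro k m V c hk hn hc
  by_contra hno
  set n := V.card with hnV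
  obtain ⟨e, einj, eV⟩ : ∃ e : ℕ → ℕ, (∀ i < n, ∀ j < n, e i = e j → i = j) ∧
      ∀ i < n, e i ∈ V := by
    refine ⟨fun i => if h : i < n then (V.equivFin.symm ⟨i, h⟩).1 else 0, ?_, ?_⟩
    · intro i hi j hj hij
      simp only [hi, hj, dif_pos] at hij
      have := V.equivFin.symm.injective (Subtype.ext hij)
      simpa using this
    · intro i hi
      simp only [hi, dif_pos]
      exact (V.equivFin.symm ⟨i, hi⟩).2
  have hno' : ∀ f : ZMod p → Finset ℕ, (∀ i j, i ≠ j → Disjoint (f i) (f j)) →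
      (∀ i, f i ⊆ V ∧ (f i).card = k) → ∀ col, ¬ ∀ i, c (f i) = col := by
    intro f h1 h2 col h3
    apply hno
    have E : Fin p ≃ ZMod p := Fintype.equivOfCardEq (by simp [ZMod.card])
    exact ⟨fun i => f (E i), fun i j hij => h1 _ _ (fun h => hij (E.injective h)),
      fun i => h2 _, col, fun i => h3 _⟩
  have pV : ∀ A, gd p n A → ∀ g, part p e A g ⊆ V := by
    intro A hA g x hx
    simp only [part, Finset.mem_image, Finset.mem_filter] at hx
    obtain ⟨a, ⟨ha, -⟩, rfl⟩ := hx
    exact eV _ (hA.2.2 a ha)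
  have pcard : ∀ A, gd p n A → ∀ g,
      (part p e A g).card = (A.filter (fun a => a.2 = g)).card := by
    intro A hA g
    apply Finset.card_image_of_injOn
    intro a ha b hb hab
    rw [Finset.mem_coe, Finset.mem_filter] at ha hb
    exact hA.2.1 a ha.1 b hb.1 (einj _ (hA.2.2 a ha.1) _ (hA.2.2 b hb.1) hab)
  have pdisj : ∀ A, gd p n A → ∀ g h, g ≠ h → Disjoint (part p e A g) (part p e A h) := by
    intro A hA g h hgh
    rw [Finset.disjoint_left]
    intro x hx hx'
    simp only [part, Finset.mem_image, Finset.mem_filter] at hx hx'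
    obtain ⟨a, ⟨ha, ha2⟩, rfl⟩ := hx
    obtain ⟨b, ⟨hb, hb2⟩, hab⟩ := hx'
    have := hA.2.1 b hb a ha (einj _ (hA.2.2 b hb) _ (hA.2.2 a ha) hab)
    subst this
    exact hgh (ha2.symm.trans hb2)
  have slc : ∀ A, gd p n A → ∀ i, (slice p (SS p e c k m A) i).card < p := by
    intro A hA i
    by_contra hge
    have hle : slice p (SS p e c k m A) i ⊆ ({i} : Finset ℕ) ×ˢ (Finset.univ : Finset (ZMod p)) := by
      intro a ha
      simp only [slice, Finset.mem_filter] at ha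
      simp only [Finset.mem_product, Finset.mem_singleton, Finset.mem_univ, and_true, ha.2]
    have heq := Finset.eq_of_subset_of_card_le hle (by
      rw [Finset.card_product]; simp [ZMod.card]; omega)
    have hall : ∀ g, ∃ s ⊆ part p e A g, s.card = k ∧ c s = i := by
      intro g
      have : (i, g) ∈ slice p (SS p e c k m A) i := by rw [heq]; simp
      simp only [slice, SS, Finset.mem_filter] at this
      exact this.1.2
    choose f hf1 hf2 hf3 using hall
    exact hno' f (fun g h hgh => Finset.disjoint_of_subset_left (hf1 g)
      (Finset.disjoint_of_subset_right (hf1 h) (pdisj A hA g h hgh)))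
      (fun g => ⟨(hf1 g).trans (pV A hA g), hf2 g⟩) i hf3
  have ScardLe : ∀ A, gd p n A → (SS p e c k m A).card ≤ m * (p - 1) := by
    intro A hA
    have hmaps : ∀ a ∈ SS p e c k m A, a.1 ∈ Finset.range m := by
      intro a ha
      simp only [SS, Finset.mem_filter, Finset.mem_product] at ha
      exact ha.1.1
    have := Finset.card_le_mul_card_image_of_maps_to (s := SS p e c k m A) hmaps (p - 1) (by
      intro i _
      have := slc A hA i
      simp only [slice] at this
      omega)
    rw [Finset.card_range] at this
    linarith [mul_comm m (p - 1)]
  have Sne : ∀ A, gd p n A → ¬ small p k A → (SS p e c k m A).Nonempty := by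
    intro A hA hs
    simp only [small, not_forall, not_le] at hs
    obtain ⟨g, hg⟩ := hs
    rw [← pcard A hA g] at hg
    obtain ⟨s, hs1, hs2⟩ := Finset.exists_subset_card_eq (show k ≤ (part p e A g).card by omega)
    refine ⟨(c s, g), ?_⟩
    simp only [SS, Finset.mem_filter, Finset.mem_product, Finset.mem_range, Finset.mem_univ,
      and_true]
    exact ⟨hc s (hs1.trans (pV A hA g)) hs2, s, hs1, hs2, rfl⟩
  have smallcard : ∀ A, small p k A → A.card ≤ p * (k - 1) := by
    intro A hs
    have := Finset.card_le_mul_card_image_of_maps_to (s := A) (f := fun a => a.2)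
      (t := Finset.univ) (by simp) (k - 1) (fun g _ => hs g)
    rw [Finset.card_univ, ZMod.card] at this
    linarith [mul_comm p (k - 1)]
  have main := tucker p
    (fun A => if small p k A then sg p A else sg p (SS p e c k m A)) n
    (p * (k - 1) + m * (p - 1))
    (fun A => if small p k A then A.card - 1 else p * (k - 1) + (SS p e c k m A).card - 1)
    ?_ ?_ ?_ ?_
  · omega
  · intro A hA
    simp only [small_sh]
    split_ifs with hs
    · apply sg_sh
      obtain ⟨a, ha⟩ := hA.1
      have : slice p A a.1 = {a} := by
        ext b
        simp only [slice, Finset.mem_filter, Finset.mem_singleton]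
        constructor
        · rintro ⟨h1, h2⟩
          exact hA.2.1 b h1 a ha h2
        · rintro rfl
          exact ⟨ha, rfl⟩
      exact ⟨a.1, by rw [this]; simp, by rw [this]; simp; omega⟩
    · rw [SS_sh]
      apply sg_sh
      obtain ⟨a, ha⟩ := Sne A hA hs
      refine ⟨a.1, ?_, slc A hA _⟩
      apply Finset.card_pos.2
      exact ⟨a, by simp [slice, ha]⟩
  · intro A B hA hB hAB
    have h1 := Finset.card_le_card hAB
    have h2 := Finset.card_le_card (SS_mono p e c k m hAB)
    by_cases hb : small p k B
    · simp only [small_mono p k hAB hb, hb, if_true]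
      omega
    · have h3 := (Sne B hB hb).card_pos
      simp only [hb, if_false]
      split_ifs with ha
      · have := smallcard A ha
        omega
      · omega
  · intro A B hA hB hAB
    have h0 := hA.1.card_pos
    have h1 := Finset.card_le_card hAB
    have h2 := Finset.card_le_card (SS_mono p e c k m hAB)
    by_cases hb : small p k B
    · simp only [small_mono p k hAB hb, hb, if_true]
      intro h
      rw [Finset.eq_of_subset_of_card_le hAB (by omega)]
    · have h3 := (Sne B hB hb).card_pos
      simp only [hb, if_false]
      split_ifs with ha
      · have := smallcard A ha
        intro h
        omega
      · have h4 := (Sne A hA ha).card_pos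
        intro h
        rw [Finset.eq_of_subset_of_card_le (SS_mono p e c k m hAB) (by omega)]
  · intro A hA
    have h0 := hA.1.card_pos
    have h1 := ScardLe A hA
    show (if small p k A then A.card - 1 else p * (k - 1) + (SS p e c k m A).card - 1) < _
    split_ifs with ha
    · have := smallcard A ha
      omega
    · have h4 := (Sne A hA ha).card_pos
      omega

lemma LB_one : LB 1 := by
  intro k m V c hk hn hc
  obtain ⟨s, hs1, hs2⟩ := Finset.exists_subset_card_eq (show k ≤ V.card by omega)
  exact ⟨fun _ => s, fun i j h => absurd (Subsingleton.elim i j) h, fun _ => ⟨hs1, hs2⟩,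
    c s, fun _ => rfl⟩

lemma LB_mul (r s : ℕ) (hr0 : 0 < r) (hs0 : 0 < s) (hr : LB r) (hs : LB s) : LB (r * s) := by
  classical
  intro k m V c hk hn hc
  set k' := m * (r - 1) + r * (k - 1) + 1 with hk'
  have h1 : ∀ W : Finset ℕ, ∃ col, W ⊆ V → W.card = k' → col < m ∧
      ∃ f : Fin r → Finset ℕ, (∀ i j, i ≠ j → Disjoint (f i) (f j)) ∧
      (∀ i, f i ⊆ W ∧ (f i).card = k) ∧ ∀ i, c (f i) = col := by
    intro W
    by_cases h : W ⊆ V ∧ W.card = k'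
    · obtain ⟨f, f1, f2, col, f3⟩ := hr k m W c hk (by omega)
        (fun s hs => hc s (hs.trans h.1))
      refine ⟨col, fun _ _ => ⟨?_, f, f1, f2, f3⟩⟩
      rw [← f3 ⟨0, hr0⟩]
      exact hc _ ((f2 _).1.trans h.1) (f2 _).2
    · exact ⟨0, fun h1 h2 => absurd ⟨h1, h2⟩ h⟩
  choose c' hc' using h1
  obtain ⟨F, F1, F2, col, F3⟩ := hs k' m V c' (by omega) (by
    obtain ⟨r, rfl⟩ : ∃ r', r = r' + 1 := ⟨r - 1, by omega⟩
    obtain ⟨s, rfl⟩ : ∃ r', s = r' + 1 := ⟨s - 1, by omega⟩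
    have e1 : (r + 1) * (s + 1) - 1 = r * s + r + s := by
      have : (r + 1) * (s + 1) = r * s + r + s + 1 := by ring
      omega
    rw [e1] at hn
    simp only [Nat.add_sub_cancel] at hk' ⊢
    rw [hk', Nat.add_sub_cancel]
    refine le_trans (le_of_eq ?_) hn
    ring) (fun W hW hWc => (hc' W hW hWc).1)
  have h2 : ∀ i, ∃ f : Fin r → Finset ℕ, (∀ i j, i ≠ j → Disjoint (f i) (f j)) ∧
      (∀ j, f j ⊆ F i ∧ (f j).card = k) ∧ ∀ j, c (f j) = col := by
    intro i
    have := (hc' (F i) (F2 i).1 (F2 i).2).2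
    rwa [F3 i] at this
  choose G G1 G2 G3 using h2
  let E : Fin (r * s) ≃ Fin r × Fin s := finProdFinEquiv.symm
  refine ⟨fun x => G (E x).2 (E x).1, ?_, ?_, col, ?_⟩
  · intro x y hxy
    by_cases h : (E x).2 = (E y).2
    · show Disjoint (G (E x).2 (E x).1) (G (E y).2 (E y).1)
      rw [h]
      apply G1
      intro h'
      exact hxy (E.injective (Prod.ext h' h))
    · exact Finset.disjoint_of_subset_left (G2 _ _).1
        (Finset.disjoint_of_subset_right (G2 _ _).1 (F1 _ _ h))
  · intro x
    exact ⟨(G2 _ _).1.trans (F2 _).1, (G2 _ _).2⟩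
  · intro x
    exact G3 _ _

end kneser

lemma LB_all (r : ℕ) (hr : 0 < r) : LB r := by
  induction r using induction_on_primes with
  | zero => omega
  | one => exact LB_one
  | prime_mul q a hq ih =>
    have ha : 0 < a := Nat.pos_of_mul_pos_left hr
    have : Fact q.Prime := ⟨hq⟩
    exact LB_mul q a hq.pos ha (LB_prime q) (ih ha)

end AFL

namespace AFL

lemma lower (n k r m : ℕ) (hk : 0 < k) (hr : 2 ≤ r) (hn : r * k ≤ n)
    (c : {s : Finset (Fin n) // s.card = k} → Fin m)
    (hc : ∀ f : Fin r → {s : Finset (Fin n) // s.card = k},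
          (∀ i j, i ≠ j → Disjoint (f i : Finset (Fin n)) (f j : Finset (Fin n))) →
            ∃ i j, c (f i) ≠ c (f j)) : n - r * k + r ≤ m * (r - 1) := by
  classical
  by_contra hlt
  let T : Finset ℕ → Finset (Fin n) := fun s => Finset.univ.filter (fun i => i.val ∈ s)
  have hT : ∀ s ⊆ Finset.range n, (T s).card = s.card := by
    intro s hs
    rw [← Finset.card_map Fin.valEmbedding]
    congr 1
    ext x
    simp only [T, Finset.mem_map, Finset.mem_filter, Finset.mem_univ, true_and,
      Fin.valEmbedding_apply]
    constructor
    · rintro ⟨a, ha, rfl⟩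
      exact ha
    · intro hx
      exact ⟨⟨x, Finset.mem_range.1 (hs hx)⟩, hx, rfl⟩
  obtain ⟨k, rfl⟩ : ∃ k', k = k' + 1 := ⟨k - 1, by omega⟩
  obtain ⟨f, f1, f2, col, f3⟩ := LB_all r (by omega) (k + 1) m (Finset.range n)
    (fun s => if h : (T s).card = k + 1 then (c ⟨T s, h⟩).val else 0) hk
    (by
      rw [Finset.card_range]
      simp only [Nat.add_sub_cancel]
      rw [mul_add] at hn hlt
      omega)
    (by
      intro s hs hsk
      have h : (T s).card = k + 1 := by rw [hT s hs, hsk]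
      simp only [h, dif_pos]
      exact (c _).2)
  have hfT : ∀ i, (T (f i)).card = k + 1 := fun i => by rw [hT _ (f2 i).1, (f2 i).2]
  obtain ⟨i, j, hij⟩ := hc (fun i => ⟨T (f i), hfT i⟩) (by
    intro i j hij
    have := f1 i j hij
    rw [Finset.disjoint_left] at this ⊢
    intro x hx hx'
    simp only [T, Finset.mem_filter, Finset.mem_univ, true_and] at hx hx'
    exact this hx hx')
  apply hij
  have hi := f3 i
  have hj := f3 j
  simp only [hfT, dif_pos] at hi hj
  exact Fin.ext (hi.trans hj.symm)

lemma upper (n k r m : ℕ) (hk : 0 < k) (hr : 2 ≤ r) (hn : r * k ≤ n)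
    (hm : n - r * k + r ≤ m * (r - 1)) :
    ∃ c : {s : Finset (Fin n) // s.card = k} → Fin m,
        ∀ f : Fin r → {s : Finset (Fin n) // s.card = k},
          (∀ i j, i ≠ j → Disjoint (f i : Finset (Fin n)) (f j : Finset (Fin n))) →
            ∃ i j, c (f i) ≠ c (f j) := by
  classical
  obtain ⟨m, rfl⟩ : ∃ m', m = m' + 1 := by
    cases m with
    | zero => simp at hm; omega
    | succ m => exact ⟨m, rfl⟩
  obtain ⟨q, rfl⟩ : ∃ q, r = q + 1 := ⟨r - 1, by omega⟩
  simp only [Nat.add_sub_cancel] at hm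
  have hq : 0 < q := by omega
  have hne : ∀ s : {s : Finset (Fin n) // s.card = k}, s.1.Nonempty := by
    intro s
    rw [← Finset.card_pos, s.2]
    exact hk
  refine ⟨fun s => ⟨min ((s.1.min' (hne s)).val / q) m, by omega⟩, ?_⟩
  intro f hf
  by_contra hcon
  push Not at hcon
  have hcol : ∀ i, min (((f i).1.min' (hne (f i))).val / q) m
      = min (((f 0).1.min' (hne (f 0))).val / q) m := by
    intro i
    simpa using hcon i 0
  set col := min (((f 0).1.min' (hne (f 0))).val / q) m with hcoldef
  have hle : col ≤ m := min_le_right _ _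
  rcases hle.lt_or_eq with hlt | heq
  · have h1 : ∀ i, ((f i).1.min' (hne (f i))).val / q = col := by
      intro i
      have := hcol i
      omega
    have hmaps : ∀ i ∈ (Finset.univ : Finset (Fin (q + 1))),
        ((f i).1.min' (hne (f i))).val ∈ Finset.Ico (col * q) (col * q + q) := by
      intro i _
      rw [Finset.mem_Ico]
      have h := (Nat.div_eq_iff hq).1 (h1 i)
      omega
    obtain ⟨i, -, j, -, hij, he⟩ := Finset.exists_ne_map_eq_of_card_lt_of_maps_to
      (by simp) hmaps
    have h2 := Finset.min'_mem _ (hne (f i))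
    have h3 := Finset.min'_mem _ (hne (f j))
    rw [Fin.ext he] at h2
    exact Finset.disjoint_left.1 (hf i j hij) h2 h3
  · have h1 : ∀ i, m * q ≤ ((f i).1.min' (hne (f i))).val := by
      intro i
      have := hcol i
      rw [← Nat.le_div_iff_mul_le hq]
      omega
    have hcard : (Finset.univ.biUnion (fun i => (f i).1)).card = (q + 1) * k := by
      rw [Finset.card_biUnion (fun i _ j _ hij => hf i j hij)]
      simp [(f _).2]
    have hsub : (Finset.univ.biUnion (fun i => (f i).1)).map Fin.valEmbedding
        ⊆ Finset.Ico (m * q) n := by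
      intro x hx
      simp only [Finset.mem_map, Finset.mem_biUnion, Finset.mem_univ, true_and] at hx
      obtain ⟨a, ⟨i, hi⟩, rfl⟩ := hx
      rw [Finset.mem_Ico]
      have h2 : ((f i).1.min' (hne (f i))) ≤ a := Finset.min'_le _ _ hi
      exact ⟨(h1 i).trans h2, a.2⟩
    have := Finset.card_le_card hsub
    rw [Finset.card_map, hcard, Nat.card_Ico] at this
    rw [add_mul m 1 q, one_mul] at hm
    have hpos : 0 < (q + 1) * k := by positivity
    omega

end AFL


/-- **Alon–Frankl–Lovász theorem**: for positive integers `n, k, r` with `r ≥ 2` and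
`n ≥ rk`, the chromatic number of the Kneser `r`-hypergraph `K_{n,k}^r` — the minimal
number `m` of colors such that there is a coloring of the `k`-element subsets of
`{1,…,n}` with `m` colors for which no `r` pairwise disjoint `k`-element subsets all
receive the same color — equals `⌈(n - rk + r)/(r - 1)⌉`. -/
theorem alon_frankl_lovasz (n k r : ℕ) (hk : 0 < k) (hr : 2 ≤ r) (hn : r * k ≤ n) :
    ((sInf {m : ℕ | ∃ c : {s : Finset (Fin n) // s.card = k} → Fin m,
        ∀ f : Fin r → {s : Finset (Fin n) // s.card = k},
          (∀ i j, i ≠ j → Disjoint (f i : Finset (Fin n)) (f j : Finset (Fin n))) →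
            ∃ i j, c (f i) ≠ c (f j)} : ℕ) : ℤ)
      = ⌈(((n : ℚ) - r * k + r) / (r - 1))⌉ := by
  classical
  set S := {m : ℕ | ∃ c : {s : Finset (Fin n) // s.card = k} → Fin m,
        ∀ f : Fin r → {s : Finset (Fin n) // s.card = k},
          (∀ i j, i ≠ j → Disjoint (f i : Finset (Fin n)) (f j : Finset (Fin n))) →
            ∃ i j, c (f i) ≠ c (f j)} with hS
  have hup : ∀ m, n - r * k + r ≤ m * (r - 1) → m ∈ S :=
    fun m hm => AFL.upper n k r m hk hr hn hm
  have hne : S.Nonempty := ⟨n - r * k + r, hup _ (Nat.le_mul_of_pos_right _ (by omega))⟩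
  have hmem := Nat.sInf_mem hne
  have hlow : n - r * k + r ≤ sInf S * (r - 1) := by
    obtain ⟨c, hc⟩ := hmem
    exact AFL.lower n k r _ hk hr hn c hc
  have hmin : ∀ m, n - r * k + r ≤ m * (r - 1) → sInf S ≤ m := fun m hm => Nat.sInf_le (hup m hm)
  generalize sInf S = M at hlow hmin
  have hr' : (0 : ℚ) < (r : ℚ) - 1 := by
    have : (2 : ℚ) ≤ r := by exact_mod_cast hr
    linarith
  have hcast : ((n - r * k + r : ℕ) : ℚ) = (n : ℚ) - r * k + r := by
    push_cast [Nat.cast_sub hn]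
    ring
  have hcast1 : ((r - 1 : ℕ) : ℚ) = (r : ℚ) - 1 := by
    rw [Nat.cast_sub (by omega)]
    simp
  symm
  rw [Int.ceil_eq_iff]
  constructor
  · rw [lt_div_iff₀ hr', ← hcast, ← hcast1]
    by_contra hcon
    push Not at hcon
    have hM : 0 < M := by
      rcases Nat.eq_zero_or_pos M with h | h
      · subst h
        simp at hlow
        omega
      · exact h
    obtain ⟨M', rfl⟩ : ∃ M', M = M' + 1 := ⟨M - 1, by omega⟩
    have h2 : ((n - r * k + r : ℕ) : ℚ) ≤ ((M' * (r - 1) : ℕ) : ℚ) := by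
      rw [Nat.cast_mul]
      refine hcon.trans (le_of_eq ?_)
      push_cast
      ring
    have := hmin M' (by exact_mod_cast h2)
    omega
  · rw [div_le_iff₀ hr', ← hcast, ← hcast1]
    exact_mod_cast hlow
end

section
/- Let T and G be two finite simple graphs such that χ(T) ≥ 3, there exists a graph homomorphism from T to G, and there is no graph homomorphism from G to T. Then there exists a finite simple graph H such that there exist graph homomorphisms from T to H and from H to G, but there is no graph homomorphism from H to T and no graph homomorphism from G to H. -/
/-- Finite colourings of shift graphs are never proper, once the ground set is large. -/
theorem shift_color (k : ℕ) : ∀ (C : Type) [Finite C], ∃ N : ℕ,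
    ∀ c : (Fin (k + 1) → Fin N) → C, ∃ s : Fin (k + 2) → Fin N, StrictMono s ∧
      c (fun i => s i.castSucc) = c (fun i => s i.succ) := by
  induction k with
  | zero =>
    intro C _
    refine ⟨Nat.card C + 1, fun c => ?_⟩
    have := Fintype.ofFinite C
    obtain ⟨x, y, hne, hxy⟩ := Fintype.exists_ne_map_eq_of_card_lt
      (fun i : Fin (Nat.card C + 1) => c (fun _ => i)) (by simp)
    wlog hlt : x < y generalizing x y
    · exact this y x hne.symm hxy.symm (lt_of_le_of_ne (not_lt.mp hlt) hne.symm)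
    refine ⟨![x, y], ?_, ?_⟩
    · rw [Fin.strictMono_iff_lt_succ]
      intro i
      fin_cases i
      simpa using hlt
    · have h1 : (fun i : Fin 1 => (![x, y] : Fin 2 → _) i.castSucc) = fun _ => x := by
        funext i; fin_cases i; rfl
      have h2 : (fun i : Fin 1 => (![x, y] : Fin 2 → _) i.succ) = fun _ => y := by
        funext i; fin_cases i; rfl
      have h3 : c (fun _ => x) = c (fun _ => y) := hxy
      rw [← h1, ← h2] at h3
      exact h3
  | succ k ih =>
    intro C _
    obtain ⟨N, hN⟩ := ih (Set C)
    refine ⟨N, fun c => ?_⟩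
    obtain ⟨s, hs, heq⟩ := hN (fun x => {a | ∃ y, x (Fin.last k) < y ∧
      c (Fin.snoc (α := fun _ => Fin N) x y) = a})
    have hmem : c s ∈ {a | ∃ y, s (Fin.last k).castSucc < y ∧
        c (Fin.snoc (α := fun _ => Fin N) (fun i => s i.castSucc) y) = a} := by
      refine ⟨s (Fin.last (k + 1)), hs (Fin.castSucc_lt_last _), ?_⟩
      congr 1
      exact Fin.snoc_init_self s
    have heq' := (Set.ext_iff.mp heq (c s)).mp hmem
    obtain ⟨y, hy, hc⟩ := heq'
    refine ⟨Fin.snoc (α := fun _ => Fin N) s y, ?_, ?_⟩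
    · rw [Fin.strictMono_iff_lt_succ]
      intro i
      rw [Fin.snoc_castSucc]
      induction i using Fin.lastCases with
      | last => simpa using hy
      | cast j =>
        rw [Fin.succ_castSucc, Fin.snoc_castSucc]
        exact hs (Fin.castSucc_lt_succ)
    · have h1 : (fun i : Fin (k + 2) =>
          Fin.snoc (α := fun _ => Fin N) s y i.castSucc) = s := by
        funext i; simp
      have h2 : (fun i : Fin (k + 2) => Fin.snoc (α := fun _ => Fin N) s y i.succ)
          = Fin.snoc (α := fun _ => Fin N) (fun i => s i.succ) y := by
        funext i
        induction i using Fin.lastCases with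
        | last => simp
        | cast j => rw [Fin.succ_castSucc, Fin.snoc_castSucc, Fin.snoc_castSucc]
      rw [h1, h2, hc]

/-- The shift graph on `(k+1)`-tuples from `Fin N`. -/
def shiftGraph (k N : ℕ) : SimpleGraph (Fin (k + 1) → Fin N) where
  Adj x y := ∃ s : Fin (k + 2) → Fin N, StrictMono s ∧
    ((x = (fun i => s i.castSucc) ∧ y = fun i => s i.succ) ∨
     (y = (fun i => s i.castSucc) ∧ x = fun i => s i.succ))
  symm := ⟨fun _ _ ⟨s, hs, h⟩ => ⟨s, hs, h.symm⟩⟩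
  loopless := ⟨by
    rintro x ⟨s, hs, ⟨h1, h2⟩ | ⟨h1, h2⟩⟩
    all_goals
      have h3 := congrFun (h1.symm.trans h2) 0
      exact absurd h3 (hs Fin.castSucc_lt_succ).ne⟩

theorem shift_strictMono {k N : ℕ} {x y : Fin (k + 1) → Fin N} (h : (shiftGraph k N).Adj x y) :
    StrictMono x := by
  obtain ⟨s, hs, ⟨h1, h2⟩ | ⟨h1, h2⟩⟩ := h
  · rw [h1]; exact fun i j hij => hs (by simpa using hij)
  · rw [h2]; exact fun i j hij => hs (by simpa using hij)

theorem shift_walk {k N : ℕ} {x y : Fin (k + 1) → Fin N} (w : (shiftGraph k N).Walk x y) :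
    ∃ h : ℤ, |h| ≤ w.length ∧ (h - w.length) % 2 = 0 ∧
      ∀ i j : Fin (k + 1), (j : ℤ) = i + h → w.length ≤ (i : ℕ) → (i : ℕ) + w.length < k + 1 →
        x i = y j := by
  induction w with
  | nil =>
    refine ⟨0, by simp, by simp, fun i j hij _ _ => ?_⟩
    have : i = j := by ext; omega
    rw [this]
  | @cons x x' y hadj w ih =>
    obtain ⟨h, h1, h2, h3⟩ := ih
    rw [abs_le] at h1
    simp only [SimpleGraph.Walk.length_cons]
    obtain ⟨s, hs, ⟨e1, e2⟩ | ⟨e1, e2⟩⟩ := hadj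
    · refine ⟨h - 1, by rw [abs_le]; push_cast; omega, by push_cast; omega, ?_⟩
      intro i j hij hi hi'
      have := h3 ⟨i - 1, by omega⟩ j (by push_cast; omega) (by simp; omega) (by simp; omega)
      refine Eq.trans ?_ this
      refine (congrFun e1 _).trans (Eq.trans ?_ (congrFun e2 _).symm)
      congr 1
      ext; simp; omega
    · refine ⟨h + 1, by rw [abs_le]; push_cast; omega, by push_cast; omega, ?_⟩
      intro i j hij hi hi'
      have := h3 ⟨i + 1, by omega⟩ j (by push_cast; omega) (by simp; omega) (by simp; omega)
      refine Eq.trans ?_ this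
      refine (congrFun e2 _).trans (Eq.trans ?_ (congrFun e1 _).symm)
      congr 1

theorem shift_no_odd {N l : ℕ} {x : Fin (2 * l + 1) → Fin N}
    (w : (shiftGraph (2 * l) N).Walk x x) (hl : w.length = l) : Even l := by
  by_contra hodd
  obtain ⟨h, h1, h2, h3⟩ := shift_walk w
  rw [hl, abs_le] at h1
  rw [hl] at h2
  rw [Nat.not_even_iff] at hodd
  have hx : StrictMono x := by
    cases w with
    | nil => simp at hl; omega
    | cons hadj _ => exact shift_strictMono hadj
  have h4 := h3 ⟨l, by omega⟩ ⟨(l + h).toNat, by omega⟩ (by push_cast; omega)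
    (by simp [hl]) (by simp [hl]; omega)
  have h5 := hx.injective h4
  rw [Fin.mk.injEq] at h5
  omega

/-- Categorical product of graphs. -/
def catProd {A B : Type} (P : SimpleGraph A) (Q : SimpleGraph B) : SimpleGraph (A × B) where
  Adj x y := P.Adj x.1 y.1 ∧ Q.Adj x.2 y.2
  symm := ⟨fun _ _ h => ⟨h.1.symm, h.2.symm⟩⟩
  loopless := ⟨fun _ h => P.irrefl h.1⟩

theorem welzl_aux {V W : Type} [Finite V] [Finite W]
    (T : SimpleGraph V) (G : SimpleGraph W)
    (hchi : 3 ≤ T.chromaticNumber)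
    (hTG : Nonempty (T →g G)) (hGT : IsEmpty (G →g T)) :
    ∃ (X : Type) (_ : Finite X) (H : SimpleGraph X),
      Nonempty (T →g H) ∧ Nonempty (H →g G) ∧
      IsEmpty (H →g T) ∧ IsEmpty (G →g H) := by
  classical
  have hT : ¬ T.Colorable 2 := fun h => by
    have := hchi.trans h.chromaticNumber_le
    exact absurd this (by decide)
  obtain ⟨a, b, hab⟩ : ∃ a b, T.Adj a b := by
    by_contra hno
    push Not at hno
    exact hT ⟨SimpleGraph.Coloring.mk (fun _ => 0) (fun {u v} h => absurd h (hno u v))⟩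
  obtain ⟨c, hc⟩ : ∃ c : G.ConnectedComponent, IsEmpty (c.toSimpleGraph →g T) := by
    by_contra hno
    push Not at hno
    exact hGT.false (SimpleGraph.homOfConnectedComponents G fun c => (hno c).some)
  have hodd : ¬ c.toSimpleGraph.Colorable 2 := by
    rintro ⟨f⟩
    refine hc.false ⟨fun v => if f v = 0 then a else b, fun {u v} h => ?_⟩
    have hne := f.valid h
    by_cases hu : f u = 0 <;> by_cases hv : f v = 0
    · omega
    · simpa [hu, hv] using hab
    · simpa [hu, hv] using hab.symm
    · omega
  rw [SimpleGraph.two_colorable_iff_forall_loop_even] at hodd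
  push Not at hodd
  obtain ⟨u, w, hw⟩ := hodd
  obtain ⟨N, hN⟩ := shift_color (2 * w.length) (c → V)
  let F := shiftGraph (2 * w.length) N
  let P := catProd c.toSimpleGraph F
  refine ⟨V ⊕ (c × (Fin (2 * w.length + 1) → Fin N)), inferInstance, T ⊕g P,
    ⟨SimpleGraph.Embedding.sumInl.toHom⟩, ?_, ⟨fun f => ?_⟩, ⟨fun f => ?_⟩⟩
  · obtain ⟨t⟩ := hTG
    refine ⟨⟨Sum.elim t (fun p => (p.1 : W)), ?_⟩⟩
    rintro (p | p) (q | q) h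
    · exact t.map_adj (by simpa using h)
    · simp at h
    · simp at h
    · have h' : P.Adj p q := by simpa using h
      exact c.toSimpleGraph_hom.map_adj h'.1
  · obtain ⟨s, hs, heq⟩ := hN (fun x v => f (Sum.inr (v, x)))
    refine hc.false ⟨fun v => f (Sum.inr (v, fun i => s i.castSucc)), fun {v v'} h => ?_⟩
    have h1 := congrFun heq v'
    refine h1.symm ▸ ?_
    apply f.map_adj
    rw [SimpleGraph.sum_adj_inr]
    exact ⟨h, s, hs, Or.inl ⟨rfl, rfl⟩⟩
  · let g : c.toSimpleGraph →g T ⊕g P := f.comp c.toSimpleGraph_hom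
    have hreach : ∀ v, (T ⊕g P).Reachable (g u) (g v) := fun v =>
      (c.connected_toSimpleGraph.preconnected u v).map g
    cases hgu : g u with
    | inl t =>
      have hl : ∀ v, ∃ t', g v = Sum.inl t' := fun v => by
        cases hgv : g v with
        | inl t' => exact ⟨t', rfl⟩
        | inr p =>
          have := hreach v
          rw [hgu, hgv] at this
          exact absurd this (SimpleGraph.not_reachable_sum_inl_inr _ _)
      choose g' hg' using hl
      refine hc.false ⟨g', fun {v v'} h => ?_⟩
      have := g.map_adj h
      rw [hg', hg'] at this
      simpa using this
    | inr p =>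
      have hl : ∀ v, ∃ t', g v = Sum.inr t' := fun v => by
        cases hgv : g v with
        | inr t' => exact ⟨t', rfl⟩
        | inl p =>
          have := hreach v
          rw [hgu, hgv] at this
          exact absurd this.symm (SimpleGraph.not_reachable_sum_inl_inr _ _)
      choose g' hg' using hl
      let k : c.toSimpleGraph →g F := ⟨fun v => (g' v).2, fun {v v'} h => by
        have := g.map_adj h
        rw [hg', hg', SimpleGraph.sum_adj_inr] at this
        exact this.2⟩
      have := shift_no_odd (w.map k) (by simp)
      exact absurd this (by simpa using hw)

/-- **Welzl's theorem**: if `T` and `G` are finite simple graphs with `χ(T) ≥ 3`,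
such that there is a graph homomorphism `T → G` but none `G → T`, then there is a
finite simple graph `H` with homomorphisms `T → H` and `H → G`, but with no
homomorphism `H → T` and none `G → H`. -/
theorem welzl {V W : Type} [Fintype V] [Fintype W]
    (T : SimpleGraph V) (G : SimpleGraph W)
    (hchi : 3 ≤ T.chromaticNumber)
    (hTG : Nonempty (T →g G)) (hGT : IsEmpty (G →g T)) :
    ∃ (m : ℕ) (H : SimpleGraph (Fin m)),
      Nonempty (T →g H) ∧ Nonempty (H →g G) ∧
      IsEmpty (H →g T) ∧ IsEmpty (G →g H) := by
  obtain ⟨X, _, H, ⟨h1⟩, ⟨h2⟩, h3, h4⟩ := welzl_aux T G hchi hTG hGT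
  let e := SimpleGraph.Iso.comap (Finite.equivFin X).symm H
  exact ⟨Nat.card X, _, ⟨e.symm.toHom.comp h1⟩, ⟨h2.comp e.toHom⟩,
    ⟨fun f => h3.false (f.comp e.symm.toHom)⟩, ⟨fun f => h4.false (e.toHom.comp f)⟩⟩
end

section
/- Let G be a finite simple graph and k ≥ −1 an integer. If the geometric realization of the nerve (order complex) of the poset of all nonempty finite subsets A of V(G) having a common neighbor (i.e., there is a vertex v adjacent to every element of A), ordered by inclusion, is k-connected, then χ(G) ≥ k + 3. -/
open CategoryTheory

/-- A space is `k`-connected (for an integer `k ≥ -1`) if it is nonempty and all its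
homotopy groups `π_n` vanish for `0 ≤ n ≤ k` (for `n = 0` this means
path-connectedness). `(-1)`-connected just means nonempty. -/
def KConnected (k : ℤ) (X : Type*) [TopologicalSpace X] : Prop :=
  Nonempty X ∧ ∀ n : ℕ, (n : ℤ) ≤ k → ∀ x : X, Subsingleton (HomotopyGroup (Fin n) X x)

/-- The poset of nonempty finite subsets of `V(G)` having a common neighbor,
ordered by inclusion: the face poset of the neighborhood complex `N(G)`. -/
def NbhdPoset {V : Type} (G : SimpleGraph V) : Type :=
  {A : Finset V // A.Nonempty ∧ ∃ v : V, ∀ a ∈ A, G.Adj v a}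

instance {V : Type} (G : SimpleGraph V) : Preorder (NbhdPoset G) :=
  Subtype.preorder _

/-- The neighborhood complex of `G`, realized topologically as the geometric
realization of the nerve (order complex) of the poset of nonempty subsets of `V(G)`
with a common neighbor. -/
noncomputable def nbhdComplex {V : Type} (G : SimpleGraph V) : TopCat :=
  SSet.toTop.obj (nerve (NbhdPoset G))

namespace LovaszProof

/-! ### Mod 2 chains of ordered simplices -/

abbrev Ch (E : Type*) := List E →₀ ZMod 2

noncomputable def cone {E : Type*} (a : E) : Ch E →ₗ[ZMod 2] Ch E :=
  Finsupp.lmapDomain _ _ (List.cons a)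

noncomputable def bdL {E : Type*} : List E → Ch E
  | [] => 0
  | a :: l => Finsupp.single l 1 + cone a (bdL l)

noncomputable def bd {E : Type*} : Ch E →ₗ[ZMod 2] Ch E :=
  Finsupp.linearCombination (ZMod 2) bdL

/-- chains supported on simplices with a given property -/
def Sup {E : Type*} (P : List E → Prop) : Submodule (ZMod 2) (Ch E) :=
  Finsupp.supported (ZMod 2) (ZMod 2) {σ | P σ}

noncomputable def mp {E F : Type*} (φ : E → F) : Ch E →ₗ[ZMod 2] Ch F :=
  Finsupp.lmapDomain _ _ (List.map φ)

section
variable {E F : Type*}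

lemma add_self_ch (c : Ch E) : c + c = 0 := by
  ext σ; simp [CharTwo.add_self_eq_zero]

@[simp] lemma cone_single (a : E) (σ : List E) (r : ZMod 2) :
    cone a (Finsupp.single σ r) = Finsupp.single (a :: σ) r := by
  simp [cone, Finsupp.lmapDomain_apply]

@[simp] lemma mp_single (φ : E → F) (σ : List E) (r : ZMod 2) :
    mp φ (Finsupp.single σ r) = Finsupp.single (σ.map φ) r := by
  simp [mp, Finsupp.lmapDomain_apply]

@[simp] lemma bd_single (σ : List E) : bd (Finsupp.single σ 1) = bdL σ := by
  simp [bd]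

lemma ext_ch {M : Type*} [AddCommMonoid M] [Module (ZMod 2) M] {f g : Ch E →ₗ[ZMod 2] M}
    (h : ∀ σ, f (Finsupp.single σ 1) = g (Finsupp.single σ 1)) (c : Ch E) : f c = g c := by
  have : f = g := by
    apply Finsupp.lhom_ext'
    intro σ
    apply LinearMap.ext_ring
    simpa using h σ
  rw [this]

lemma single_mem_Sup {P : List E → Prop} {σ : List E} (h : P σ) :
    (Finsupp.single σ 1 : Ch E) ∈ Sup P :=
  Finsupp.single_mem_supported _ _ h

lemma lin_mem {M : Type*} [AddCommMonoid M] [Module (ZMod 2) M] {f : Ch E →ₗ[ZMod 2] M}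
    {P : List E → Prop} {N : Submodule (ZMod 2) M}
    (h : ∀ σ, P σ → f (Finsupp.single σ 1) ∈ N) {c : Ch E} (hc : c ∈ Sup P) : f c ∈ N := by
  have : Sup P ≤ N.comap f := by
    unfold Sup
    rw [Finsupp.supported_eq_span_single, Submodule.span_le]
    rintro _ ⟨σ, hσ, rfl⟩
    exact h σ hσ
  exact this hc

lemma lin_eq {M : Type*} [AddCommGroup M] [Module (ZMod 2) M] {f g : Ch E →ₗ[ZMod 2] M}
    {P : List E → Prop}
    (h : ∀ σ, P σ → f (Finsupp.single σ 1) = g (Finsupp.single σ 1)) {c : Ch E}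
    (hc : c ∈ Sup P) : f c = g c := by
  have : (f - g) c ∈ (⊥ : Submodule (ZMod 2) M) := by
    apply lin_mem (P := P) _ hc
    intro σ hσ
    simp [h σ hσ]
  simpa [sub_eq_zero] using this

lemma Sup_mono {P Q : List E → Prop} (h : ∀ σ, P σ → Q σ) {c : Ch E} (hc : c ∈ Sup P) :
    c ∈ Sup Q :=
  Finsupp.supported_mono (fun σ hσ => h σ hσ) hc

lemma bd_cone (a : E) (c : Ch E) : bd (cone a c) = c + cone a (bd c) := by
  refine ext_ch (f := bd ∘ₗ cone a) (g := LinearMap.id + cone a ∘ₗ bd) ?_ c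
  intro σ
  simp [bdL]

lemma bd_bdL (σ : List E) : bd (bdL σ) = 0 := by
  induction σ with
  | nil => simp [bdL]
  | cons a l ih => simp [bdL, bd_cone, ih, add_self_ch]

lemma bd_mp (φ : E → F) (c : Ch E) : bd (mp φ c) = mp φ (bd c) := by
  refine ext_ch (f := bd ∘ₗ mp φ) (g := mp φ ∘ₗ bd) ?_ c
  intro σ
  simp only [LinearMap.comp_apply, mp_single, bd_single]
  induction σ with
  | nil => simp [bdL]
  | cons a l ih =>
    simp only [List.map_cons, bdL, map_add, mp_single, ih]
    congr 1
    refine ext_ch (f := cone (φ a) ∘ₗ mp φ) (g := mp φ ∘ₗ cone a) ?_ _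
    intro σ; simp

lemma mp_cone (φ : E → F) (a : E) (c : Ch E) : mp φ (cone a c) = cone (φ a) (mp φ c) := by
  refine ext_ch (f := mp φ ∘ₗ cone a) (g := cone (φ a) ∘ₗ mp φ) ?_ c
  intro σ; simp

lemma bdL_mem (σ : List E) :
    bdL σ ∈ Sup (fun ρ => ρ.Sublist σ ∧ ρ.length + 1 = σ.length) := by
  induction σ with
  | nil => simp [bdL]
  | cons a l ih =>
    simp only [bdL]
    refine Submodule.add_mem _ (single_mem_Sup ⟨List.sublist_cons_self a l, rfl⟩) ?_
    refine lin_mem (P := _) ?_ ih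
    rintro ρ ⟨h1, h2⟩
    rw [cone_single]
    exact single_mem_Sup ⟨h1.cons_cons a, by simp [h2]⟩

/-- generalized subdivision operator, on simplices with `n` vertices -/
noncomputable def sd (b : List E → E) : ℕ → Ch E →ₗ[ZMod 2] Ch E
  | 0 => LinearMap.id
  | n + 1 => Finsupp.linearCombination (ZMod 2) (fun σ => cone (b σ) (sd b n (bdL σ)))

lemma sd_succ_single (b : List E → E) (n : ℕ) (σ : List E) :
    sd b (n+1) (Finsupp.single σ 1) = cone (b σ) (sd b n (bdL σ)) := by
  simp [sd]

lemma bd_sd (b : List E → E) (n : ℕ) {c : Ch E} (hc : c ∈ Sup (fun σ => σ.length = n + 1)) :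
    bd (sd b (n+1) c) = sd b n (bd c) := by
  induction n generalizing c with
  | zero =>
    refine lin_eq (f := bd ∘ₗ sd b 1) (g := sd b 0 ∘ₗ bd) ?_ hc
    intro σ hσ
    simp [bd_cone, sd, bd_bdL]
  | succ n ih =>
    refine lin_eq (f := bd ∘ₗ sd b (n+1+1)) (g := sd b (n+1) ∘ₗ bd) ?_ hc
    intro σ hσ
    simp only [LinearMap.comp_apply, sd_succ_single, bd_cone, bd_single]
    rw [ih, bd_bdL]
    · simp
    · exact Sup_mono (fun ρ h => by have := h.2; omega) (bdL_mem σ)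

lemma sd_mp (b : List E → E) (b' : List F → F) (φ : E → F) (h : ∀ σ, φ (b σ) = b' (σ.map φ))
    (n : ℕ) (c : Ch E) : mp φ (sd b n c) = sd b' n (mp φ c) := by
  induction n generalizing c with
  | zero => simp [sd]
  | succ n ih =>
    refine ext_ch (f := mp φ ∘ₗ sd b (n+1)) (g := sd b' (n+1) ∘ₗ mp φ) ?_ c
    intro σ
    simp only [LinearMap.comp_apply, sd_succ_single, mp_single, mp_cone, h, ih]
    rw [← bd_single, ← bd_mp, mp_single, bd_single]

lemma sd_mem (b : List E → E) (Q : List E → List E → Prop) (h0 : Q [] [])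
    (h1 : ∀ σ ρ σ', ρ.Sublist σ → ρ.length + 1 = σ.length → Q ρ σ' → Q σ (b σ :: σ'))
    (n : ℕ) (σ : List E) (hσ : σ.length = n) : sd b n (Finsupp.single σ 1) ∈ Sup (Q σ) := by
  induction n generalizing σ with
  | zero =>
    obtain rfl := List.length_eq_zero_iff.mp hσ
    simpa [sd] using single_mem_Sup h0
  | succ n ih =>
    rw [sd_succ_single]
    have : sd b n (bdL σ) ∈
        Sup (fun σ' => ∃ ρ : List E, ρ.Sublist σ ∧ ρ.length + 1 = σ.length ∧ Q ρ σ') := by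
      refine lin_mem ?_ (bdL_mem σ)
      rintro ρ ⟨h2, h3⟩
      exact Sup_mono (fun σ' h => ⟨ρ, h2, h3, h⟩) (ih ρ (by omega))
    refine lin_mem ?_ this
    rintro σ' ⟨ρ, h2, h3, h4⟩
    rw [cone_single]
    exact single_mem_Sup (h1 σ ρ σ' h2 h3 h4)

end

/-! ### Alternating sign functional -/

open Classical in
noncomputable def alt : Bool → List ℤ → ZMod 2
  | _, [] => 1
  | s, a :: l => if (0 < a ↔ s = true) then alt (!s) l else 0

noncomputable def Alt (s : Bool) : Ch ℤ →ₗ[ZMod 2] ZMod 2 :=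
  Finsupp.linearCombination (ZMod 2) (alt s)

@[simp] lemma Alt_single (s : Bool) (σ : List ℤ) : Alt s (Finsupp.single σ 1) = alt s σ := by
  simp [Alt]

lemma Alt_cone (s : Bool) (a : ℤ) (c : Ch ℤ) [Decidable (0 < a ↔ s = true)] :
    Alt s (cone a c) = if (0 < a ↔ s = true) then Alt (!s) c else 0 := by
  split_ifs with h
  · refine ext_ch (f := Alt s ∘ₗ cone a) (g := Alt (!s)) ?_ c
    intro σ; simp [alt, h]
  · refine ext_ch (f := Alt s ∘ₗ cone a) (g := 0) ?_ c
    intro σ; simp [alt, h]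

lemma Alt_bdL (s : Bool) (σ : List ℤ) : Alt s (bdL σ) = alt s σ + alt (!s) σ := by
  classical
  induction σ generalizing s with
  | nil => simp [bdL, alt, CharTwo.add_self_eq_zero]
  | cons a l ih =>
    simp only [bdL, map_add, Alt_single, Alt_cone, ih, alt, Bool.not_not]
    by_cases h : (0 < a ↔ s = true)
    · have h' : ¬ (0 < a ↔ (!s) = true) := by cases s <;> simp_all
      rw [if_pos h, if_pos h, if_neg h']
      linear_combination (CharTwo.add_self_eq_zero (alt s l))
    · have h' : (0 < a ↔ (!s) = true) := by cases s <;> simp_all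
      rw [if_neg h, if_neg h, if_pos h']
      ring

lemma alt_neg (s : Bool) (σ : List ℤ) (h : ∀ a ∈ σ, a ≠ 0) :
    alt s (σ.map (fun a => -a)) = alt (!s) σ := by
  classical
  induction σ generalizing s with
  | nil => simp [alt]
  | cons a l ih =>
    have ha : a ≠ 0 := h a (by simp)
    simp only [List.map_cons, alt]
    rw [ih _ (fun b hb => h b (by simp [hb]))]
    have : (0 < -a ↔ s = true) ↔ (0 < a ↔ (!s) = true) := by
      rcases lt_or_gt_of_ne ha with h1 | h1
      · have h2 : ¬ (0 < a) := by omega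
        have h3 : 0 < -a := by omega
        cases s <;> simp [h2, h1]
      · have h2 : ¬ (0 < -a) := by omega
        have h3 : ¬ (a < 0) := by omega
        cases s <;> simp [h1, h3]
    simp only [this]

/-- A good list of labels. -/
def Good (n : ℕ) (σ : List ℤ) : Prop :=
  (∀ a ∈ σ, a ≠ 0 ∧ |a| ≤ n) ∧ (∀ a ∈ σ, ∀ b ∈ σ, a ≠ -b) ∧ σ.Pairwise (fun a b => |b| ≤ |a|)

lemma good_alt (n : ℕ) (s : Bool) (a : ℤ) (σ : List ℤ) (h : Good n (a :: σ))
    (ha : alt s (a :: σ) ≠ 0) : (σ.length : ℤ) + 1 ≤ |a| := by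
  classical
  induction σ generalizing a s with
  | nil => simpa using Int.one_le_abs (h.1 a (by simp)).1
  | cons b l ih =>
    obtain ⟨h1, h2, h3⟩ := h
    have ha' := ha
    rw [alt] at ha
    split_ifs at ha with hs
    · have hb := ih (!s) b ⟨fun x hx => h1 x (by simp [hx]),
        fun x hx y hy => h2 x (by simp [hx]) y (by simp [hy]), h3.of_cons⟩ ha
      rw [alt] at ha
      split_ifs at ha with hs'
      · have hab : |b| ≤ |a| := (List.pairwise_cons.mp h3).1 b (by simp)
        have hne : a ≠ -b := h2 a (by simp) b (by simp)
        have hb0 := (h1 b (by simp)).1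
        have ha0 := (h1 a (by simp)).1
        have : |b| ≠ |a| := by
          intro he
          rcases abs_eq_abs.mp he with h | h
          · subst h; cases s <;> simp_all
          · omega
        push_cast [List.length_cons]
        omega
      · exact absurd rfl ha
    · exact absurd rfl ha

lemma good_alt_zero (n : ℕ) (s : Bool) (σ : List ℤ) (h : Good n σ) (hl : σ.length = n + 1) :
    alt s σ = 0 := by
  by_contra hne
  match σ, h, hl, hne with
  | a :: l, h, hl, hne =>
    have h1 := good_alt n s a l h hne
    have h2 := (h.1 a (by simp)).2
    simp at hl
    omega

/-- the entry of largest absolute value -/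
def mx : List ℤ → ℤ
  | [] => 0
  | a :: l => if |mx l| ≤ |a| then a else mx l

lemma mx_neg (σ : List ℤ) : -(mx σ) = mx (σ.map (fun a => -a)) := by
  induction σ with
  | nil => simp [mx]
  | cons a l ih =>
    simp only [List.map_cons, mx, ← ih, abs_neg]
    split_ifs <;> simp

lemma mx_ge (σ : List ℤ) : ∀ a ∈ σ, |a| ≤ |mx σ| := by
  induction σ with
  | nil => simp
  | cons a l ih =>
    intro x hx
    simp only [mx]
    rcases List.mem_cons.mp hx with rfl | hx
    · split_ifs with h
      · exact le_rfl
      · omega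
    · have := ih x hx
      split_ifs with h <;> omega

lemma mx_mem (σ : List ℤ) (h : σ ≠ []) : mx σ ∈ σ := by
  induction σ with
  | nil => simp at h
  | cons a l ih =>
    simp only [mx]
    split_ifs with h
    · simp
    · rcases l with _ | ⟨b, l⟩
      · simp [mx] at h
      · exact List.mem_cons_of_mem _ (ih (by simp))

lemma sort_mem (n : ℕ) (σ : List ℤ) (hσ : σ.length = n) :
    sd mx n (Finsupp.single σ 1) ∈ Sup (fun σ' => σ'.length = n ∧ (∀ a ∈ σ', a ∈ σ) ∧
      σ'.Pairwise (fun a b => |b| ≤ |a|)) := by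
  have := sd_mem mx (fun σ σ' => σ'.length = σ.length ∧ (∀ a ∈ σ', a ∈ σ) ∧
      σ'.Pairwise (fun a b => |b| ≤ |a|)) (by simp) ?_ n σ hσ
  · rwa [hσ] at this
  · rintro σ ρ σ' h1 h2 ⟨h3, h4, h5⟩
    have hne : σ ≠ [] := by rintro rfl; simp at h2
    refine ⟨by simp; omega, ?_, ?_⟩
    · intro a ha
      rcases List.mem_cons.mp ha with rfl | ha
      · exact mx_mem σ hne
      · exact h1.subset (h4 a ha)
    · refine List.pairwise_cons.mpr ⟨fun a ha => ?_, h5⟩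
      exact mx_ge σ a (h1.subset (h4 a ha))

end LovaszProof

namespace LovaszProof

/-! ### Barycentric subdivision -/

section
variable {E : Type*} [NormedAddCommGroup E] [NormedSpace ℝ E]

noncomputable def avg (σ : List E) : E := ((σ.length : ℝ)⁻¹) • σ.sum

lemma avg_eq (σ : List E) : avg σ = ∑ i : Fin σ.length, ((σ.length : ℝ)⁻¹) • σ[i] := by
  rw [← Finset.smul_sum, avg]
  congr 1
  exact (Fin.sum_univ_getElem σ).symm

lemma avg_mem {K : Set E} (hK : Convex ℝ K) (σ : List E) (h0 : σ ≠ []) (h : ∀ x ∈ σ, x ∈ K) :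
    avg σ ∈ K := by
  rw [avg_eq]
  have hl : (σ.length : ℝ) ≠ 0 := by simpa using h0
  refine hK.sum_mem (fun i _ => by positivity) ?_ (fun i _ => h _ (List.getElem_mem _))
  simp [hl]

lemma avg_dist (σ : List E) (D : ℝ) (h : ∀ x ∈ σ, ∀ y ∈ σ, dist x y ≤ D) (x : E) (hx : x ∈ σ) :
    dist (avg σ) x ≤ ((σ.length : ℝ) - 1) / σ.length * D := by
  obtain ⟨i0, hi0, rfl⟩ := List.getElem_of_mem hx
  have hl : (σ.length : ℝ) ≠ 0 := by
    have : 0 < σ.length := by omega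
    positivity
  have h1 : avg σ - σ[i0] = ∑ i : Fin σ.length, ((σ.length : ℝ)⁻¹) • (σ[i] - σ[i0]) := by
    simp only [smul_sub, Finset.sum_sub_distrib, ← avg_eq]
    congr 1
    rw [Finset.sum_const, Finset.card_univ, Fintype.card_fin, ← Nat.cast_smul_eq_nsmul ℝ, smul_smul,
      mul_inv_cancel₀ hl, one_smul]
  rw [dist_eq_norm, h1]
  calc _ ≤ ∑ i : Fin σ.length, ((σ.length : ℝ)⁻¹) * (D - if i = ⟨i0, hi0⟩ then D else 0) := by
        refine norm_sum_le_of_le _ fun i _ => ?_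
        rw [norm_smul, norm_inv, Real.norm_natCast]
        refine mul_le_mul_of_nonneg_left ?_ (by positivity)
        split_ifs with hi
        · subst hi; simp
        · rw [← dist_eq_norm, sub_zero]
          exact h _ (List.getElem_mem _) _ (List.getElem_mem _)
    _ = _ := by
        rw [← Finset.mul_sum, Finset.sum_sub_distrib]
        simp
        field_simp

def Sub (N : ℕ) (σ σ' : List E) : Prop :=
  σ'.length = σ.length ∧ (∀ K : Set E, Convex ℝ K → (∀ x ∈ σ, x ∈ K) → ∀ x ∈ σ', x ∈ K) ∧
  (σ.length ≤ N + 1 → ∀ D : ℝ, 0 ≤ D → (∀ x ∈ σ, ∀ y ∈ σ, dist x y ≤ D) →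
    ∀ x ∈ σ', ∀ y ∈ σ', dist x y ≤ (N / (N + 1) : ℝ) * D)

lemma sd_avg_mem (N n : ℕ) (σ : List E) (hσ : σ.length = n) :
    sd avg n (Finsupp.single σ 1) ∈ Sup (Sub N σ) := by
  refine sd_mem avg (Sub N) ⟨by simp, by simp, by simp⟩ ?_ n σ hσ
  rintro σ ρ σ' h1 h2 ⟨h3, h4, h5⟩
  have hne : σ ≠ [] := by rintro rfl; simp at h2
  have hK : ∀ K : Set E, Convex ℝ K → (∀ x ∈ σ, x ∈ K) → ∀ x ∈ σ', x ∈ K :=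
    fun K hK h x hx => h4 K hK (fun y hy => h y (h1.subset hy)) x hx
  refine ⟨by simp; omega, ?_, ?_⟩
  · intro K hK' h x hx
    rcases List.mem_cons.mp hx with rfl | hx
    · exact avg_mem hK' σ hne h
    · exact hK K hK' h x hx
  · intro hN D hD h
    have hr : 0 ≤ (N / (N + 1) : ℝ) * D := by positivity
    have hl : 0 < σ.length := List.length_pos_iff.mpr hne
    have hc : ∀ x ∈ σ', dist (avg σ) x ≤ (N / (N + 1) : ℝ) * D := by
      intro x hx
      rw [dist_comm]
      refine hK (Metric.closedBall (avg σ) _) (convex_closedBall _ _) ?_ x hx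
      intro y hy
      rw [Metric.mem_closedBall, dist_comm]
      refine (avg_dist σ D h y hy).trans ?_
      refine mul_le_mul_of_nonneg_right ?_ hD
      have : (σ.length : ℝ) ≤ N + 1 := by exact_mod_cast hN
      have h' : (0 : ℝ) < σ.length := by exact_mod_cast hl
      rw [div_le_div_iff₀ h' (by positivity)]
      nlinarith
    intro x hx y hy
    rcases List.mem_cons.mp hx with rfl | hx' <;> rcases List.mem_cons.mp hy with rfl | hy'
    · simpa using hr
    · exact hc y hy'
    · rw [dist_comm]; exact hc x hx'
    · exact h5 (by omega) D hD (fun x hx y hy => h x (h1.subset hx) y (h1.subset hy)) x hx' y hy'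

lemma avg_neg (σ : List E) : -(avg σ) = avg (σ.map (fun a => -a)) := by
  have : (σ.map (fun a => -a)).sum = - σ.sum := by
    induction σ with
    | nil => simp
    | cons a l ih => simp [ih, add_comm]
  simp [avg, this]

/-- iterated subdivision -/
noncomputable def sdi (M n : ℕ) : Ch E →ₗ[ZMod 2] Ch E := (sd avg n) ^ M

lemma sdi_succ (M n : ℕ) (c : Ch E) : sdi (M+1) n c = sd avg n (sdi M n c) := by
  simp only [sdi, pow_succ', Module.End.mul_apply]

lemma sdi_mem (N M n : ℕ) (hn : n ≤ N + 1) (K : Set E) (hK : Convex ℝ K) (D : ℝ) (hD : 0 ≤ D)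
    (σ : List E) (hσ : σ.length = n) (h : ∀ x ∈ σ, x ∈ K)
    (hd : ∀ x ∈ σ, ∀ y ∈ σ, dist x y ≤ D) :
    sdi M n (Finsupp.single σ 1) ∈ Sup (fun σ' : List E => σ'.length = n ∧ (∀ x ∈ σ', x ∈ K) ∧
      ∀ x ∈ σ', ∀ y ∈ σ', dist x y ≤ (N / (N + 1) : ℝ) ^ M * D) := by
  induction M with
  | zero => simpa [sdi] using single_mem_Sup ⟨hσ, h, hd⟩
  | succ M ih =>
    rw [sdi_succ]
    refine lin_mem ?_ ih
    rintro ρ ⟨h1, h2, h3⟩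
    refine Sup_mono ?_ (sd_avg_mem N n ρ h1)
    rintro σ' ⟨h4, h5, h6⟩
    refine ⟨h4.trans h1, h5 K hK h2, ?_⟩
    intro x hx y hy
    have := h6 (by omega) _ (by positivity) h3 x hx y hy
    rw [pow_succ']
    linarith

lemma sdi_len (M n : ℕ) {c : Ch E} (hc : c ∈ Sup (fun σ => σ.length = n)) :
    sdi M n c ∈ Sup (fun σ : List E => σ.length = n) := by
  induction M with
  | zero => simpa [sdi] using hc
  | succ M ih =>
    rw [sdi_succ]
    refine lin_mem ?_ ih
    intro ρ h1
    exact Sup_mono (fun σ' h => h.1.trans h1) (sd_avg_mem 0 n ρ h1)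

lemma bd_sdi (M n : ℕ) {c : Ch E} (hc : c ∈ Sup (fun σ => σ.length = n + 1)) :
    bd (sdi M (n+1) c) = sdi M n (bd c) := by
  induction M with
  | zero => simp [sdi]
  | succ M ih =>
    have := sdi_len M (n+1) hc
    rw [sdi_succ, sdi_succ, bd_sd avg n this, ih]

lemma sdi_neg (M n : ℕ) (c : Ch E) :
    mp (fun a : E => -a) (sdi M n c) = sdi M n (mp (fun a => -a) c) := by
  induction M with
  | zero => simp [sdi]
  | succ M ih =>
    rw [sdi_succ, sdi_succ, ← ih, sd_mp avg avg (fun a => -a) avg_neg]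
end

/-! ### Octahedral chains -/

abbrev Vec (n : ℕ) := Fin (n + 1) → ℝ

def ebas (n j : ℕ) : Vec n := fun i => if i.val = j then 1 else 0

noncomputable def ng {E : Type*} [Neg E] : Ch E →ₗ[ZMod 2] Ch E := mp (fun a => -a)

noncomputable def wch (n : ℕ) : ℕ → Ch (Vec n)
  | 0 => Finsupp.single [] 1
  | j + 1 => cone (ebas n j) (wch n j) + ng (cone (ebas n j) (wch n j))

noncomputable def cch (n j : ℕ) : Ch (Vec n) := cone (ebas n j) (wch n j)

lemma ng_ng {E : Type*} [InvolutiveNeg E] (c : Ch E) : ng (ng c) = c := by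
  refine ext_ch (f := ng ∘ₗ ng) (g := LinearMap.id) ?_ c
  intro σ
  simp [ng]

lemma ng_wch (n j : ℕ) : ng (wch n j) = wch n j := by
  cases j with
  | zero => simp [wch, ng]
  | succ j => simp only [wch, map_add, ng_ng]; rw [add_comm]

lemma bd_wch (n j : ℕ) : bd (wch n j) = 0 := by
  induction j with
  | zero => simp [wch, bdL]
  | succ j ih =>
    have h : bd (cone (ebas n j) (wch n j)) = wch n j := by simp [bd_cone, ih]
    simp only [wch, map_add, h]
    rw [ng, bd_mp, h, ← ng, ng_wch, add_self_ch]

lemma bd_cch (n j : ℕ) : bd (cch n j) = wch n j := by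
  simp [cch, bd_cone, bd_wch]

/-- closed facets of the cross-polytope -/
def Kf (n : ℕ) (s : Vec n) : Set (Vec n) := {x | (∀ i, 0 ≤ s i * x i) ∧ ∑ i, s i * x i = 1}

lemma convex_Kf (n : ℕ) (s : Vec n) : Convex ℝ (Kf n s) := by
  intro x hx y hy a b ha hb hab
  refine ⟨fun i => ?_, ?_⟩
  · have := hx.1 i
    have := hy.1 i
    have e : s i * (a • x + b • y) i = a * (s i * x i) + b * (s i * y i) := by
      simp; ring
    rw [e]; positivity
  · have e : ∀ i, s i * (a • x + b • y) i = a * (s i * x i) + b * (s i * y i) := by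
      intro i; simp; ring
    simp only [e, Finset.sum_add_distrib, ← Finset.mul_sum, hx.2, hy.2]
    simpa using hab

def Facet (n j : ℕ) (σ : List (Vec n)) : Prop :=
  σ.length = j ∧ ∃ s : Vec n, (∀ i, s i = 1 ∨ s i = -1) ∧
    (∀ x ∈ σ, x ∈ Kf n s) ∧ ∀ x ∈ σ, ∀ i : Fin (n+1), j ≤ i.val → x i = 0

lemma facet_cons {n j : ℕ} (hj : j ≤ n) {σ : List (Vec n)} (h : Facet n j σ) :
    Facet n (j+1) (ebas n j :: σ) := by
  obtain ⟨h1, s, hs, h2, h3⟩ := h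
  refine ⟨by simp [h1], Function.update s ⟨j, by omega⟩ 1, ?_, ?_, ?_⟩
  · intro i
    by_cases hi : i = ⟨j, by omega⟩
    · subst hi; simp
    · simp [Function.update_of_ne hi, hs]
  · intro x hx
    rcases List.mem_cons.mp hx with rfl | hx
    · have e : ∀ i : Fin (n+1), Function.update s ⟨j, by omega⟩ 1 i * ebas n j i
          = if i = ⟨j, by omega⟩ then 1 else 0 := by
        intro i
        by_cases hi : i = ⟨j, by omega⟩
        · subst hi; simp [ebas]
        · have : i.val ≠ j := fun h => hi (Fin.ext h)
          simp [ebas, hi, this]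
      refine ⟨fun i => ?_, ?_⟩
      · rw [e]; split_ifs <;> simp
      · simp only [e]; simp
    · have e : ∀ i : Fin (n+1), Function.update s ⟨j, by omega⟩ 1 i * x i = s i * x i := by
        intro i
        by_cases hi : i = ⟨j, by omega⟩
        · subst hi
          have := h3 x hx ⟨j, by omega⟩ le_rfl
          simp [this]
        · simp [hi]
      refine ⟨fun i => ?_, ?_⟩
      · rw [e]; exact (h2 x hx).1 i
      · simp only [e]; exact (h2 x hx).2
  · intro x hx i hi
    rcases List.mem_cons.mp hx with rfl | hx
    · have : i.val ≠ j := by omega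
      simp [ebas, this]
    · exact h3 x hx i (by omega)

lemma facet_neg {n j : ℕ} {σ : List (Vec n)} (h : Facet n j σ) :
    Facet n j (σ.map (fun a => -a)) := by
  obtain ⟨h1, s, hs, h2, h3⟩ := h
  refine ⟨by simp [h1], fun i => - s i, ?_, ?_, ?_⟩
  · intro i
    rcases hs i with h | h <;> simp [h]
  · intro x hx
    obtain ⟨y, hy, rfl⟩ := List.mem_map.mp hx
    simpa [Kf] using h2 y hy
  · intro x hx i hi
    obtain ⟨y, hy, rfl⟩ := List.mem_map.mp hx
    simpa using h3 y hy i hi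

lemma cone_facet {n j : ℕ} (hj : j ≤ n) {c : Ch (Vec n)} (h : c ∈ Sup (Facet n j)) :
    cone (ebas n j) c ∈ Sup (Facet n (j+1)) := by
  refine lin_mem ?_ h
  intro σ hσ
  rw [cone_single]
  exact single_mem_Sup (facet_cons hj hσ)

lemma wch_facet (n j : ℕ) (hj : j ≤ n + 1) : wch n j ∈ Sup (Facet n j) := by
  induction j with
  | zero => exact single_mem_Sup ⟨rfl, fun _ => 1, by simp, by simp, by simp⟩
  | succ j ih =>
    have := cone_facet (by omega) (ih (by omega))
    refine Submodule.add_mem _ this ?_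
    refine lin_mem ?_ this
    intro σ hσ
    rw [ng, mp_single]
    exact single_mem_Sup (facet_neg hσ)

lemma cch_facet (n j : ℕ) (hj : j ≤ n) : cch n j ∈ Sup (Facet n (j+1)) :=
  cone_facet hj (wch_facet n j (by omega))

/-! ### The Borsuk-Ulam type theorem -/

def Ksph (n : ℕ) : Set (Vec n) := {x | ∑ i, |x i| = 1}

lemma Kf_sub (n : ℕ) (s : Vec n) (hs : ∀ i, s i = 1 ∨ s i = -1) : Kf n s ⊆ Ksph n := by
  rintro x ⟨h1, h2⟩
  change ∑ i, |x i| = 1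
  rw [← h2]
  refine Finset.sum_congr rfl fun i _ => ?_
  have := h1 i
  rw [← abs_of_nonneg this, abs_mul]
  rcases hs i with h | h <;> simp [h]

lemma Ksph_norm (n : ℕ) {x : Vec n} (hx : x ∈ Ksph n) : ‖x‖ ≤ 1 := by
  refine (pi_norm_le_iff_of_nonneg zero_le_one).mpr fun i => ?_
  have hx' : ∑ i, |x i| = 1 := hx
  rw [← hx', Real.norm_eq_abs]
  exact Finset.single_le_sum (f := fun i => |x i|) (fun i _ => abs_nonneg _) (Finset.mem_univ i)

lemma Ksph_ne (n : ℕ) {x : Vec n} (hx : x ∈ Ksph n) : x ≠ 0 := by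
  rintro rfl
  simp [Ksph] at hx

lemma Ksph_compact (n : ℕ) : IsCompact (Ksph n) := by
  refine (isCompact_closedBall (0 : Vec n) 1).of_isClosed_subset ?_ ?_
  · exact isClosed_eq (by fun_prop) continuous_const
  · intro x hx
    simpa using Ksph_norm n hx

open Classical in
noncomputable def lab {n : ℕ} (h : Vec n → (Fin n → ℝ)) (x : Vec n) : ℤ :=
  if x = 0 then 0 else
    let i := sInf {i : ℕ | ∃ hi : i < n, 1 ≤ |h x ⟨i, hi⟩|}
    if ∃ hi : i < n, 1 ≤ h x ⟨i, hi⟩ then (i + 1 : ℤ) else -(i + 1 : ℤ)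

lemma lab_spec {n : ℕ} (h : Vec n → (Fin n → ℝ)) (h1 : ∀ x ≠ 0, ∃ i, 1 ≤ |h x i|)
    (x : Vec n) (hx : x ≠ 0) : ∃ i : Fin n,
      i.val = sInf {i : ℕ | ∃ hi : i < n, 1 ≤ |h x ⟨i, hi⟩|} ∧
      ((lab h x = (i.val + 1 : ℤ) ∧ 1 ≤ h x i) ∨ (lab h x = -(i.val + 1 : ℤ) ∧ h x i ≤ -1)) := by
  set S := {i : ℕ | ∃ hi : i < n, 1 ≤ |h x ⟨i, hi⟩|} with hS
  have hne : S.Nonempty := by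
    obtain ⟨i, hi⟩ := h1 x hx
    exact ⟨i, i.2, hi⟩
  obtain ⟨hi, hi'⟩ := Nat.sInf_mem hne
  refine ⟨⟨sInf S, hi⟩, rfl, ?_⟩
  by_cases hp : 1 ≤ h x ⟨sInf S, hi⟩
  · left
    refine ⟨?_, hp⟩
    have : ∃ hi : sInf S < n, 1 ≤ h x ⟨sInf S, hi⟩ := ⟨hi, hp⟩
    simp only [lab, if_neg hx]
    rw [← hS, if_pos this]
  · right
    refine ⟨?_, ?_⟩
    · have : ¬ ∃ hi : sInf S < n, 1 ≤ h x ⟨sInf S, hi⟩ := fun ⟨_, h⟩ => hp h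
      simp only [lab, if_neg hx]
      rw [← hS, if_neg this]
    · rcases le_abs'.mp hi' with h | h
      · exact h
      · exact absurd h hp

lemma lab_neg {n : ℕ} (h : Vec n → (Fin n → ℝ)) (hodd : ∀ x ≠ 0, h (-x) = - h x)
    (h1 : ∀ x ≠ 0, ∃ i, 1 ≤ |h x i|) (x : Vec n) : lab h (-x) = - lab h x := by
  by_cases hx : x = 0
  · subst hx; simp [lab]
  obtain ⟨i, hi, hi'⟩ := lab_spec h h1 x hx
  obtain ⟨j, hj, hj'⟩ := lab_spec h h1 (-x) (neg_ne_zero.mpr hx)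
  have : i = j := by
    apply Fin.ext
    rw [hi, hj, hodd x hx]
    simp
  subst this
  rw [hodd x hx] at hj'
  simp only [Pi.neg_apply] at hj'
  rcases hi' with h | h <;> rcases hj' with h' | h'
  · linarith
  · rw [h.1, h'.1]
  · rw [h.1, h'.1]; simp
  · linarith

theorem borsuk_ulam (n : ℕ) (h : Vec n → (Fin n → ℝ)) (hc : ContinuousOn h {0}ᶜ)
    (hodd : ∀ x ≠ 0, h (-x) = - h x) (h1 : ∀ x ≠ 0, ∃ i, 1 ≤ |h x i|) : False := by
  have huc := (Ksph_compact n).uniformContinuousOn_of_continuous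
    (hc.mono fun x hx => Ksph_ne n hx)
  obtain ⟨δ, hδ, hu⟩ := Metric.uniformContinuousOn_iff.mp huc 2 (by norm_num)
  obtain ⟨M, hM⟩ : ∃ M : ℕ, (n / (n + 1) : ℝ) ^ M * 2 < δ := by
    obtain ⟨M, hM⟩ := exists_pow_lt_of_lt_one (half_pos hδ)
      (show (n / (n + 1) : ℝ) < 1 by rw [div_lt_one (by positivity)]; linarith)
    exact ⟨M, by linarith⟩
  let T : ℕ → Ch (Vec n) →ₗ[ZMod 2] Ch ℤ := fun j => sd mx j ∘ₗ mp (lab h) ∘ₗ sdi M j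
  have hTng : ∀ j c, T j (ng c) = ng (T j c) := by
    intro j c
    simp only [T, LinearMap.comp_apply, ng]
    rw [sd_mp mx mx (fun a => -a) mx_neg, ← sdi_neg]
    congr 1
    refine ext_ch (f := mp (lab h) ∘ₗ mp (fun a => -a)) (g := mp (fun a => -a) ∘ₗ mp (lab h)) ?_ _
    intro σ
    simp [Function.comp_def, lab_neg h hodd h1]
  have hTbd : ∀ j, ∀ c ∈ Sup (fun σ : List (Vec n) => σ.length = j + 1),
      bd (T (j+1) c) = T j (bd c) := by
    intro j c hc
    simp only [T, LinearMap.comp_apply]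
    rw [bd_sd, bd_mp, bd_sdi M j hc]
    refine lin_mem ?_ (sdi_len M (j+1) hc)
    intro σ hσ
    rw [mp_single]
    exact single_mem_Sup (by simpa using hσ)
  have hTgood : ∀ j ≤ n + 1, ∀ c ∈ Sup (Facet n j),
      T j c ∈ Sup (fun σ => σ.length = j ∧ Good n σ) := by
    intro j hj c hc
    refine lin_mem ?_ hc
    rintro σ ⟨hl, s, hs, hK, -⟩
    simp only [T, LinearMap.comp_apply]
    have hm := sdi_mem n M j hj (Kf n s) (convex_Kf n s) 2 (by norm_num) σ hl hK (by
      intro x hx y hy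
      have := Ksph_norm n (Kf_sub n s hs (hK x hx))
      have := Ksph_norm n (Kf_sub n s hs (hK y hy))
      rw [dist_eq_norm]
      linarith [norm_sub_le x y])
    have hm2 := lin_mem (f := sd mx j ∘ₗ mp (lab h))
      (N := Sup (fun σ => σ.length = j ∧ Good n σ)) ?_ hm
    · exact hm2
    rintro ρ ⟨hρl, hρK, hρd⟩
    simp only [LinearMap.comp_apply, mp_single]
    refine Sup_mono ?_ (sort_mem j (ρ.map (lab h)) (by simpa using hρl))
    rintro σ' ⟨h2, h3, h4⟩
    refine ⟨h2, ?_, ?_, h4⟩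
    · intro a ha
      obtain ⟨x, hx, rfl⟩ := List.mem_map.mp (h3 a ha)
      obtain ⟨i, -, hi⟩ := lab_spec h h1 x (Ksph_ne n (Kf_sub n s hs (hρK x hx)))
      have := i.2
      rcases hi with hi | hi
      · rw [hi.1]
        refine ⟨by omega, ?_⟩
        rw [abs_of_nonneg (by omega)]; omega
      · rw [hi.1]
        refine ⟨by omega, ?_⟩
        rw [abs_neg, abs_of_nonneg (by omega)]; omega
    · intro a ha b hb hab
      obtain ⟨x, hx, rfl⟩ := List.mem_map.mp (h3 a ha)
      obtain ⟨y, hy, rfl⟩ := List.mem_map.mp (h3 b hb)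
      have hxK := Kf_sub n s hs (hρK x hx)
      have hyK := Kf_sub n s hs (hρK y hy)
      have hd := hu x hxK y hyK ((hρd x hx y hy).trans_lt hM)
      obtain ⟨i, -, hi⟩ := lab_spec h h1 x (Ksph_ne n hxK)
      obtain ⟨i', -, hi'⟩ := lab_spec h h1 y (Ksph_ne n hyK)
      have hdi : ∀ i, |h x i - h y i| < 2 := fun i => by
        have := (dist_le_pi_dist (h x) (h y) i).trans_lt hd
        rwa [Real.dist_eq] at this
      rcases hi with ⟨e1, p1⟩ | ⟨e1, p1⟩ <;> rcases hi' with ⟨e2, p2⟩ | ⟨e2, p2⟩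
      · omega
      · obtain rfl : i = i' := Fin.ext (by omega)
        have := (abs_lt.mp (hdi i)).2
        linarith
      · obtain rfl : i = i' := Fin.ext (by omega)
        have := (abs_lt.mp (hdi i)).1
        linarith
      · omega
  have hone : ∀ j ≤ n + 1, ∀ s, Alt s (T j (wch n j)) = 1 := by
    intro j
    induction j with
    | zero =>
      intro _ s
      simp [T, sd, wch, sdi, alt]
    | succ j ih =>
      intro hj s
      have hcf := cch_facet n j (by omega)
      have hg := hTgood (j+1) hj _ hcf
      have e : wch n (j+1) = cch n j + ng (cch n j) := rfl
      rw [e, map_add, hTng, map_add]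
      have e2 : Alt s (ng (T (j+1) (cch n j))) = Alt (!s) (T (j+1) (cch n j)) := by
        refine lin_eq (f := Alt s ∘ₗ ng) (g := Alt (!s)) ?_ hg
        rintro σ ⟨-, hσ⟩
        simp only [LinearMap.comp_apply, ng, mp_single, Alt_single]
        exact alt_neg s σ (fun a ha => (hσ.1 a ha).1)
      have e3 : ∀ c, Alt s (bd c) = Alt s c + Alt (!s) c := by
        refine ext_ch (f := Alt s ∘ₗ bd) (g := Alt s + Alt (!s)) ?_
        intro σ
        simp [Alt_bdL]
      rw [e2, ← e3, hTbd j _ (Sup_mono (fun σ h => h.1) hcf), bd_cch]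
      exact ih (by omega) s
  have hz : Alt true (T (n+1) (wch n (n+1))) = 0 := by
    refine lin_eq (f := Alt true) (g := 0) ?_ (hTgood (n+1) le_rfl _ (wch_facet n (n+1) le_rfl))
    rintro σ ⟨hl, hσ⟩
    simpa using good_alt_zero n true σ hσ hl
  rw [hone (n+1) le_rfl true] at hz
  exact one_ne_zero hz

end LovaszProof

namespace LovaszProof
open scoped unitInterval Topology

/-! ### From vanishing homotopy groups to extension of maps -/

lemma continuousOn_of_comp {A Y X : Type*} [TopologicalSpace A] [CompactSpace A]
    [TopologicalSpace Y] [T2Space Y] [TopologicalSpace X] (p : A → Y) (hp : Continuous p)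
    (H : A → X) (hH : Continuous H) (F : Y → X) (hF : ∀ a, F (p a) = H a) :
    ContinuousOn F (Set.range p) := by
  rw [continuousOn_iff_isClosed]
  intro t ht
  refine ⟨p '' (H ⁻¹' t), ((ht.preimage hH).isCompact.image hp).isClosed, ?_⟩
  ext y
  constructor
  · rintro ⟨h1, a, rfl⟩
    refine ⟨⟨a, ?_, rfl⟩, a, rfl⟩
    simpa [hF] using h1
  · rintro ⟨⟨a, ha, rfl⟩, -⟩
    refine ⟨?_, a, rfl⟩
    simpa [hF] using ha

noncomputable def Nn (n : ℕ) (x : Vec n) : ℝ := ‖(Fin.init x : Fin n → ℝ)‖ + |x (Fin.last n)|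

lemma init_smul' {n : ℕ} (a : ℝ) (x : Vec n) :
    (Fin.init (a • x) : Fin n → ℝ) = a • (Fin.init x : Fin n → ℝ) := rfl

lemma init_neg' {n : ℕ} (x : Vec n) :
    (Fin.init (-x) : Fin n → ℝ) = -(Fin.init x : Fin n → ℝ) := rfl

lemma continuous_init' {n : ℕ} : Continuous (fun x : Vec n => (Fin.init x : Fin n → ℝ)) := by
  unfold Fin.init
  fun_prop

lemma continuous_Nn (n : ℕ) : Continuous (Nn n) := by
  unfold Nn
  exact (continuous_init'.norm).add (by fun_prop)

lemma Nn_smul (n : ℕ) (a : ℝ) (x : Vec n) : Nn n (a • x) = |a| * Nn n x := by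
  simp only [Nn, init_smul', norm_smul, Pi.smul_apply, smul_eq_mul, abs_mul, Real.norm_eq_abs]
  ring

lemma Nn_neg (n : ℕ) (x : Vec n) : Nn n (-x) = Nn n x := by
  simp [Nn, init_neg']

lemma Nn_nonneg (n : ℕ) (x : Vec n) : 0 ≤ Nn n x := by
  unfold Nn; positivity

lemma eq_zero_of_init {n : ℕ} (x : Vec n) (h : (Fin.init x : Fin n → ℝ) = 0)
    (h' : x (Fin.last n) = 0) : x = 0 := by
  rw [← Fin.snoc_init_self x]
  funext i
  refine Fin.lastCases ?_ (fun j => ?_) i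
  · simpa using h'
  · simpa using congrFun h j

lemma Nn_pos (n : ℕ) (x : Vec n) (hx : x ≠ 0) : 0 < Nn n x := by
  refine (Nn_nonneg n x).lt_of_ne' fun h => hx ?_
  unfold Nn at h
  have h1 : ‖(Fin.init x : Fin n → ℝ)‖ = 0 := by
    linarith [norm_nonneg (Fin.init x : Fin n → ℝ), abs_nonneg (x (Fin.last n))]
  have h2 : |x (Fin.last n)| = 0 := by
    linarith [norm_nonneg (Fin.init x : Fin n → ℝ), abs_nonneg (x (Fin.last n))]
  exact eq_zero_of_init x (norm_eq_zero.mp h1) (abs_eq_zero.mp h2)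

/-- centered coordinates on the cube -/
noncomputable def vv {n : ℕ} (u : Fin n → I) : Fin n → ℝ := fun i => 2 * (u i : ℝ) - 1

noncomputable def gg (r : ℝ) : ℝ := (1 - max r (1/2)) / max r (1/2)

noncomputable def qq {n : ℕ} (u : Fin n → I) : Vec n :=
  Fin.snoc (α := fun _ => ℝ) ((2 * gg ‖vv u‖) • vv u) (1 - 2 * ‖vv u‖)

lemma continuous_vv {n : ℕ} : Continuous (vv (n := n)) := by
  unfold vv; fun_prop

lemma continuous_gg : Continuous gg := by
  unfold gg
  refine Continuous.div (by fun_prop) (by fun_prop) fun r => ?_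
  have : (1/2 : ℝ) ≤ max r (1/2) := le_max_right _ _
  linarith

lemma continuous_qq {n : ℕ} : Continuous (qq (n := n)) := by
  have h1 := (continuous_vv (n := n)).norm
  unfold qq
  refine Continuous.finSnoc (A := fun _ => ℝ) ?_ ?_
  · exact ((continuous_const.mul (continuous_gg.comp h1))).smul continuous_vv
  · fun_prop

lemma norm_vv_le {n : ℕ} (u : Fin n → I) : ‖vv u‖ ≤ 1 := by
  refine (pi_norm_le_iff_of_nonneg zero_le_one).mpr fun i => ?_
  have h1 := (u i).2.1
  have h2 := (u i).2.2
  rw [Real.norm_eq_abs, abs_le, vv]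
  constructor <;> linarith

lemma bdry_of_norm {n : ℕ} (u : Fin n → I) (h : ‖vv u‖ = 1) : u ∈ Cube.boundary (Fin n) := by
  by_contra hb
  have : ‖vv u‖ < 1 := by
    refine (pi_norm_lt_iff zero_lt_one).mpr fun i => ?_
    have h1 : 0 < (u i : ℝ) := by
      refine lt_of_le_of_ne (u i).2.1 fun e => hb ⟨i, Or.inl ?_⟩
      exact Subtype.ext e.symm
    have h2 : (u i : ℝ) < 1 := by
      refine lt_of_le_of_ne (u i).2.2 fun e => hb ⟨i, Or.inr ?_⟩
      exact Subtype.ext e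
    rw [Real.norm_eq_abs, abs_lt, vv]
    constructor <;> linarith
  linarith

lemma norm_of_bdry {n : ℕ} (u : Fin n → I) (h : u ∈ Cube.boundary (Fin n)) : ‖vv u‖ = 1 := by
  refine le_antisymm (norm_vv_le u) ?_
  obtain ⟨i, hi⟩ := h
  refine le_trans ?_ (norm_le_pi_norm (vv u) i)
  rcases hi with hi | hi <;> simp [vv, hi]
  norm_num

lemma vv_inj {n : ℕ} {u u' : Fin n → I} (h : vv u = vv u') : u = u' := by
  funext i
  have := congrFun h i
  simp only [vv] at this
  exact Subtype.ext (by linarith)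

lemma vv_surj {n : ℕ} (v : Fin n → ℝ) (h : ‖v‖ ≤ 1) : ∃ u : Fin n → I, vv u = v := by
  have hv : ∀ i, |v i| ≤ 1 := fun i => (norm_le_pi_norm v i).trans h
  refine ⟨fun i => ⟨(v i + 1) / 2, ?_, ?_⟩, ?_⟩
  · linarith [(abs_le.mp (hv i)).1]
  · linarith [(abs_le.mp (hv i)).2]
  · funext i
    simp [vv]; ring

lemma gg_low {r : ℝ} (h : r ≤ 1/2) : gg r = 1 := by
  rw [gg, max_eq_right h]; norm_num

lemma gg_high {r : ℝ} (h : 1/2 ≤ r) : gg r = (1 - r) / r := by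
  rw [gg, max_eq_left h]

lemma gg_pos {r : ℝ} (h : r < 1) : 0 < gg r := by
  have : (1/2 : ℝ) ≤ max r (1/2) := le_max_right _ _
  have h2 : max r (1/2) < 1 := max_lt h (by norm_num)
  unfold gg
  apply div_pos <;> linarith

lemma gg_one : gg 1 = 0 := by rw [gg_high] <;> norm_num

lemma qq_init {n : ℕ} (u : Fin n → I) :
    (Fin.init (qq u) : Fin n → ℝ) = (2 * gg ‖vv u‖) • vv u := by
  unfold qq; exact Fin.init_snoc (α := fun _ => ℝ) _ _

lemma qq_last {n : ℕ} (u : Fin n → I) : qq u (Fin.last n) = 1 - 2 * ‖vv u‖ := by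
  unfold qq; exact Fin.snoc_last (α := fun _ => ℝ) _ _

lemma qq_ext {n : ℕ} {x y : Vec n} (h : (Fin.init x : Fin n → ℝ) = (Fin.init y : Fin n → ℝ))
    (h' : x (Fin.last n) = y (Fin.last n)) : x = y := by
  rw [← Fin.snoc_init_self x, ← Fin.snoc_init_self y, h, h']

lemma Nn_qq {n : ℕ} (u : Fin n → I) : Nn n (qq u) = 1 := by
  have hr0 := norm_nonneg (vv u)
  have hr1 := norm_vv_le u
  rw [Nn, qq_init, qq_last, norm_smul, Real.norm_eq_abs, abs_mul]
  generalize ‖vv u‖ = r at *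
  rcases le_total r (1/2) with h | h
  · rw [gg_low h, abs_of_nonneg (by linarith : 0 ≤ 1 - 2 * r)]
    norm_num
  · have hr : 0 < r := by linarith
    have : 0 ≤ (1 - r) / r := div_nonneg (by linarith) hr.le
    rw [gg_high h, abs_of_nonpos (by linarith : 1 - 2 * r ≤ 0), abs_of_nonneg this,
      abs_of_nonneg (by norm_num : (0 : ℝ) ≤ 2)]
    field_simp
    ring

lemma qq_surj {n : ℕ} (hn : n ≠ 0) (x : Vec n) (hx : Nn n x = 1) : ∃ u : Fin n → I, qq u = x := by
  set w : Fin n → ℝ := Fin.init x with hw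
  set t := x (Fin.last n) with ht
  have hN : ‖w‖ + |t| = 1 := hx
  have hw0 := norm_nonneg w
  have ht1 := abs_le.mp (show |t| ≤ 1 by linarith)
  suffices H : ∃ v : Fin n → ℝ, ‖v‖ = (1 - t) / 2 ∧ (2 * gg ((1 - t) / 2)) • v = w by
    obtain ⟨v, hv1, hv2⟩ := H
    obtain ⟨u, hu⟩ := vv_surj v (by rw [hv1]; linarith)
    refine ⟨u, qq_ext ?_ ?_⟩
    · rw [qq_init, hu, hv1, hv2]
    · rw [qq_last, hu, hv1]; ring
  rcases le_total 0 t with h | h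
  · refine ⟨(1/2 : ℝ) • w, ?_, ?_⟩
    · rw [norm_smul]
      rw [abs_of_nonneg h] at hN
      norm_num
      linarith
    · rw [gg_low (by linarith), smul_smul]; norm_num
  · rw [abs_of_nonpos h] at hN
    rcases eq_or_lt_of_le ht1.1 with h1 | h1
    · refine ⟨fun _ => 1, ?_, ?_⟩
      · rw [← h1]
        have : Nonempty (Fin n) := ⟨⟨0, Nat.pos_of_ne_zero hn⟩⟩
        rw [pi_norm_const]; norm_num
      · have : w = 0 := norm_eq_zero.mp (by linarith)
        rw [this, ← h1]
        have : (1 - (-1) : ℝ) / 2 = 1 := by norm_num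
        rw [this, gg_one]; simp
    · have hr1 : (1 - t) / 2 < 1 := by linarith
      have hg := gg_pos hr1
      refine ⟨(2 * gg ((1 - t) / 2))⁻¹ • w, ?_, ?_⟩
      · rw [norm_smul, Real.norm_eq_abs, abs_of_nonneg (by positivity), gg_high (by linarith)]
        have e : ‖w‖ = 1 + t := by linarith
        have h2 : 0 < 1 - t := by linarith
        have h3 : 0 < 1 + t := by linarith
        rw [e]
        have e2 : 1 - (1 - t) / 2 = (1 + t) / 2 := by ring
        rw [e2]
        field_simp
      · rw [smul_smul, mul_inv_cancel₀ (by positivity), one_smul]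

lemma qq_inj {n : ℕ} {u u' : Fin n → I} (h : qq u = qq u') :
    u = u' ∨ (u ∈ Cube.boundary (Fin n) ∧ u' ∈ Cube.boundary (Fin n)) := by
  have h1 : ‖vv u‖ = ‖vv u'‖ := by
    have := congrFun h (Fin.last n)
    rw [qq_last, qq_last] at this
    linarith
  have h2 : (Fin.init (qq u) : Fin n → ℝ) = (Fin.init (qq u') : Fin n → ℝ) := by rw [h]
  rw [qq_init, qq_init, ← h1] at h2
  rcases eq_or_lt_of_le (norm_vv_le u) with h3 | h3
  · right; exact ⟨bdry_of_norm u h3, bdry_of_norm u' (h1 ▸ h3)⟩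
  · left
    apply vv_inj
    have hg := gg_pos h3
    exact smul_right_injective _ (by positivity) h2

lemma qq_bdry {n : ℕ} {u : Fin n → I} (h : u ∈ Cube.boundary (Fin n)) :
    qq u = Fin.snoc (α := fun _ => ℝ) (0 : Fin n → ℝ) (-1) := by
  rw [qq, norm_of_bdry u h, gg_one]
  congr 1
  · simp
  · norm_num

section ext
variable {X : Type*} [TopologicalSpace X]

lemma Nn_zero (x : Vec 0) : Nn 0 x = |x 0| := by
  have : (Fin.init x : Fin 0 → ℝ) = 0 := Subsingleton.elim _ _
  simp [Nn, this]

lemma extend_zero (hX : ∀ x : X, Subsingleton (HomotopyGroup (Fin 0) X x)) (f : Vec 0 → X) :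
    ∃ F : Vec 0 → X, ContinuousOn F {x | Nn 0 x ≤ 1} ∧ ∀ x, Nn 0 x = 1 → F x = f x := by
  let a := f (fun _ => -1)
  let b := f (fun _ => 1)
  have hs : Subsingleton (ZerothHomotopy X) :=
    (HomotopyGroup.pi0EquivZerothHomotopy (x := a)).symm.subsingleton_congr.mpr (hX a)
  have hj : Joined a b := Quotient.exact (hs.elim (Quotient.mk _ a) (Quotient.mk _ b))
  obtain ⟨γ⟩ := hj
  refine ⟨fun x => γ.extend ((x 0 + 1) / 2), ?_, ?_⟩
  · exact (γ.continuous_extend.comp (by fun_prop)).continuousOn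
  · intro x hx
    rw [Nn_zero] at hx
    rcases (abs_eq zero_le_one).mp hx with h | h
    · have : x = fun _ => 1 := by funext i; rw [Subsingleton.elim (α := Fin 1) i 0, h]
      rw [this]; simp [b]
    · have : x = fun _ => -1 := by funext i; rw [Subsingleton.elim (α := Fin 1) i 0, h]
      rw [this]; simp [a]

open Classical in
lemma extend_pos (n : ℕ) (hn : n ≠ 0)
    (hX : ∀ x : X, Subsingleton (HomotopyGroup (Fin n) X x)) (f : Vec n → X)
    (hf : ContinuousOn f {0}ᶜ) :
    ∃ F : Vec n → X, ContinuousOn F {x | Nn n x ≤ 1} ∧ ∀ x, Nn n x = 1 → F x = f x := by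
  have hq0 : ∀ u : Fin n → I, qq u ≠ 0 := by
    intro u h
    have := Nn_qq u
    rw [h] at this
    have h0 := Nn_smul n 0 0
    simp at h0
    linarith
  let x0 : X := f (Fin.snoc (α := fun _ => ℝ) (0 : Fin n → ℝ) (-1))
  let l : GenLoop (Fin n) X x0 :=
    ⟨⟨fun u => f (qq u), hf.comp_continuous continuous_qq hq0⟩, fun u hu => by
      simp only [ContinuousMap.coe_mk, qq_bdry hu, x0]⟩
  have hl : GenLoop.Homotopic l GenLoop.const :=
    Quotient.exact ((hX x0).elim (Quotient.mk _ l) (Quotient.mk _ GenLoop.const))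
  obtain ⟨H⟩ := hl
  have H0 : ∀ u, H (0, u) = f (qq u) := fun u => by
    rw [H.apply_zero]; rfl
  have H1 : ∀ u, H (1, u) = x0 := fun u => by
    rw [H.apply_one]; rfl
  have Hb : ∀ t u, u ∈ Cube.boundary (Fin n) → H (t, u) = x0 := fun t u hu => by
    rw [H.eq_snd t hu]; rfl
  let p : I × (Fin n → I) → Vec n := fun a => (1 - (a.1 : ℝ)) • qq a.2
  have hp : Continuous p := by
    have := (continuous_qq (n := n)).comp (continuous_snd (X := I))
    have h1 : Continuous (fun a : I × (Fin n → I) => 1 - (a.1 : ℝ)) := by fun_prop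
    exact h1.smul this
  have hNp : ∀ a, Nn n (p a) = 1 - (a.1 : ℝ) := by
    intro a
    have := a.1.2.2
    simp only [p, Nn_smul, Nn_qq, mul_one]
    exact abs_of_nonneg (by linarith)
  have hpH : ∀ a b, p a = p b → H a = H b := by
    rintro ⟨t, u⟩ ⟨t', u'⟩ h
    have h1 : t = t' := by
      have h1 := hNp (t, u)
      rw [h, hNp] at h1
      simp only at h1
      exact Subtype.ext (by linarith)
    subst h1
    by_cases ht : t = 1
    · subst ht; rw [H1, H1]
    · have ht' : (1 - (t : ℝ)) ≠ 0 := fun h => ht (Subtype.ext (show (t : ℝ) = 1 by linarith))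
      have h2 : qq u = qq u' := smul_right_injective _ ht' h
      rcases qq_inj h2 with h3 | ⟨h3, h4⟩
      · rw [h3]
      · rw [Hb t u h3, Hb t u' h4]
  let F : Vec n → X := fun y => if h : ∃ a, p a = y then H h.choose else x0
  have hF : ∀ a, F (p a) = H a := by
    intro a
    have h : ∃ b, p b = p a := ⟨a, rfl⟩
    simp only [F, dif_pos h]
    exact hpH _ _ h.choose_spec
  refine ⟨F, (continuousOn_of_comp p hp H H.continuous F hF).mono ?_, ?_⟩
  · intro x hx
    have hx' : Nn n x ≤ 1 := hx
    by_cases h0 : x = 0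
    · subst h0
      refine ⟨(1, fun _ => 0), ?_⟩
      simp [p]
    · have hpos := Nn_pos n x h0
      obtain ⟨u, hu⟩ := qq_surj hn ((Nn n x)⁻¹ • x) (by
        rw [Nn_smul, abs_of_nonneg (by positivity), inv_mul_cancel₀ hpos.ne'])
      refine ⟨(⟨1 - Nn n x, by linarith, by linarith⟩, u), ?_⟩
      simp only [p, hu, sub_sub_cancel]
      rw [smul_smul, mul_inv_cancel₀ hpos.ne', one_smul]
  · intro x hx
    obtain ⟨u, rfl⟩ := qq_surj hn x hx
    have : p (0, u) = qq u := by simp [p]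
    rw [← H0, ← hF, this]

lemma extend (n : ℕ)
    (hX : ∀ x : X, Subsingleton (HomotopyGroup (Fin n) X x)) (f : Vec n → X)
    (hf : ContinuousOn f {0}ᶜ) :
    ∃ F : Vec n → X, ContinuousOn F {x | Nn n x ≤ 1} ∧ ∀ x, Nn n x = 1 → F x = f x := by
  rcases Nat.eq_zero_or_pos n with rfl | h
  · exact extend_zero hX f
  · exact extend_pos n h.ne' hX f hf

def EqMap (τ : X → X) (n : ℕ) : Prop :=
  ∃ f : Vec n → X, ContinuousOn f {0}ᶜ ∧ ∀ x ≠ 0, f (-x) = τ (f x)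

lemma eqMap_zero (τ : X → X) (hτ : ∀ x, τ (τ x) = x) (x0 : X) : EqMap τ 0 := by
  classical
  refine ⟨fun x => if 0 < x 0 then x0 else τ x0, ?_, ?_⟩
  · have hc : ContinuousOn (fun x : Vec 0 => if 0 < x 0 then x0 else τ x0)
        ({x | 0 < x 0} ∪ {x | x 0 < 0}) := by
      have o1 : IsOpen {x : Vec 0 | 0 < x 0} := isOpen_lt continuous_const (continuous_apply 0)
      have o2 : IsOpen {x : Vec 0 | x 0 < 0} := isOpen_lt (continuous_apply 0) continuous_const
      refine ContinuousOn.union_of_isOpen ?_ ?_ o1 o2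
      · exact continuousOn_const.congr (f := fun _ => x0) fun x hx => if_pos hx
      · exact continuousOn_const.congr (f := fun _ => τ x0) fun x hx => if_neg (not_lt.mpr (le_of_lt hx))
    refine hc.mono fun x hx => ?_
    have : x 0 ≠ 0 := fun h => hx (by
      change x = 0
      funext i; rw [Subsingleton.elim (α := Fin 1) i 0, h]; rfl)
    exact (lt_or_gt_of_ne this).symm
  · intro x hx
    have : x 0 ≠ 0 := fun h => hx (by
      funext i; rw [Subsingleton.elim (α := Fin 1) i 0, h]; rfl)
    rcases lt_or_gt_of_ne this with h | h
    · have h' : ¬ (0 < x 0) := by linarith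
      simp [h, h', hτ]
    · have h' : ¬ (x 0 < 0) := by linarith
      simp [h, h']

lemma eqMap_succ (τ : X → X) (hτc : Continuous τ) (hτ : ∀ x, τ (τ x) = x) (n : ℕ)
    (hX : ∀ x : X, Subsingleton (HomotopyGroup (Fin n) X x)) (h : EqMap τ n) :
    EqMap τ (n+1) := by
  classical
  obtain ⟨f, hf, hodd⟩ := h
  obtain ⟨F, hF, hFf⟩ := extend n hX f hf
  let ini : Vec (n+1) → Vec n := fun x => Fin.init x
  have hini : Continuous ini := continuous_init'
  let M : Vec (n+1) → ℝ := fun x => Nn n (ini x) + |x (Fin.last (n+1))|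
  have hMc : Continuous M := ((continuous_Nn n).comp hini).add (by fun_prop)
  have hMpos : ∀ x ≠ 0, 0 < M x := by
    intro x hx
    by_cases h : ini x = 0
    · have : x (Fin.last (n+1)) ≠ 0 := fun h' => hx (eq_zero_of_init x h h')
      have := abs_pos.mpr this
      have := Nn_nonneg n (ini x)
      simp only [M]; linarith
    · have := Nn_pos n (ini x) h
      have := abs_nonneg (x (Fin.last (n+1)))
      simp only [M]; linarith
  let y : Vec (n+1) → Vec n := fun x => (M x)⁻¹ • ini x
  have hMneg : ∀ x, M (-x) = M x := by
    intro x
    have : ini (-x) = - ini x := rfl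
    simp [M, this, Nn_neg]
  have hyneg : ∀ x, y (-x) = - y x := by
    intro x
    have : ini (-x) = - ini x := rfl
    simp [y, hMneg, this]
  have hNy : ∀ x ≠ 0, Nn n (y x) = (M x)⁻¹ * Nn n (ini x) := by
    intro x hx
    simp only [y, Nn_smul]
    rw [abs_of_nonneg (inv_nonneg.mpr (hMpos x hx).le)]
  have hy1 : ∀ x ≠ 0, Nn n (y x) ≤ 1 := by
    intro x hx
    rw [hNy x hx, inv_mul_le_one₀ (hMpos x hx)]
    simp only [M]
    linarith [abs_nonneg (x (Fin.last (n+1)))]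
  have hy2 : ∀ x ≠ 0, x (Fin.last (n+1)) = 0 → Nn n (y x) = 1 := by
    intro x hx h0
    rw [hNy x hx]
    have : M x = Nn n (ini x) := by simp [M, h0]
    rw [← this, inv_mul_cancel₀ (hMpos x hx).ne']
  have hy0 : ∀ x ≠ 0, x (Fin.last (n+1)) = 0 → F (-(y x)) = τ (F (y x)) := by
    intro x hx h0
    have h1 := hy2 x hx h0
    have hne : y x ≠ 0 := by
      intro h
      have h00 := Nn_smul n 0 0
      simp at h00
      rw [h] at h1
      linarith
    rw [hFf _ h1, hFf _ (by rw [Nn_neg, h1]), hodd _ hne]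
  refine ⟨fun x => if 0 ≤ x (Fin.last (n+1)) then F (y x) else τ (F (-(y x))), ?_, ?_⟩
  · rw [continuousOn_iff_continuous_domRestrict]
    have hyc : Continuous (fun x : ({0}ᶜ : Set (Vec (n+1))) => y x) := by
      have h1 : Continuous (fun x : ({0}ᶜ : Set (Vec (n+1))) => (M x)⁻¹) :=
        (hMc.comp continuous_subtype_val).inv₀ fun x => (hMpos x x.2).ne'
      exact h1.smul (hini.comp continuous_subtype_val)
    refine Continuous.if_le (f := fun _ => (0 : ℝ))
      (g := fun x : ({0}ᶜ : Set (Vec (n+1))) => x.1 (Fin.last (n+1))) ?_ ?_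
      continuous_const ((continuous_apply _).comp continuous_subtype_val) ?_
    · exact hF.comp_continuous hyc fun x => hy1 x x.2
    · refine hτc.comp (hF.comp_continuous hyc.neg fun x => ?_)
      change Nn n (-(y x)) ≤ 1
      rw [Nn_neg]
      exact hy1 x x.2
    · intro x hx
      rw [hy0 x x.2 hx.symm, hτ]
  · intro x hx
    simp only [hyneg, neg_neg, Pi.neg_apply]
    rcases lt_trichotomy (x (Fin.last (n+1))) 0 with h | h | h
    · rw [if_pos (by linarith), if_neg (by linarith), hτ]
    · rw [if_pos (by linarith), if_pos (by linarith), hy0 x hx h]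
    · rw [if_neg (by linarith), if_pos (by linarith)]

lemma eqMap_all (τ : X → X) (hτc : Continuous τ) (hτ : ∀ x, τ (τ x) = x) (x0 : X) (n : ℕ)
    (hX : ∀ j < n, ∀ x : X, Subsingleton (HomotopyGroup (Fin j) X x)) : EqMap τ n := by
  induction n with
  | zero => exact eqMap_zero τ hτ x0
  | succ n ih =>
    exact eqMap_succ τ hτc hτ n (hX n (by omega)) (ih fun j hj => hX j (by omega))

end ext
end LovaszProof


namespace LovaszProof
open Opposite

/-- The affine map of standard simplices, as a continuous map. -/
noncomputable def sMap {n m : ℕ} (f : Fin (n+1) → Fin (m+1)) :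
    C(stdSimplex ℝ (Fin (n+1)), stdSimplex ℝ (Fin (m+1))) :=
  ⟨stdSimplex.map f, stdSimplex.continuous_map f⟩

/-- The characteristic map of a simplex in the realization. -/
noncomputable def eta {K : SSet.{0}} {Δ : SimplexCategoryᵒᵖ} (σ : K.obj Δ) :
    C(stdSimplex ℝ (Fin (Δ.unop.len + 1)), SSet.toTop.obj K) :=
  TopCat.toSSetObjEquiv _ _ ((sSetTopAdj.unit.app K).app Δ σ)

lemma eta_map {K : SSet.{0}} {Δ Δ' : SimplexCategoryᵒᵖ} (f : Δ ⟶ Δ') (σ : K.obj Δ) :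
    eta (K.map f σ) = (eta σ).comp (sMap f.unop) := by
  unfold eta
  have := ConcreteCategory.congr_hom ((sSetTopAdj.unit.app K).naturality f) σ
  simp only [ConcreteCategory.comp_apply] at this
  exact (congrArg _ this).trans rfl

/-- Morphism of simplicial sets given by a compatible family. -/
noncomputable def preLift {K : SSet.{0}} (Z : TopCat.{0})
    (Φ : ∀ Δ : SimplexCategoryᵒᵖ, K.obj Δ → C(stdSimplex ℝ (Fin (Δ.unop.len+1)), Z))
    (nat : ∀ (Δ Δ' : SimplexCategoryᵒᵖ) (f : Δ ⟶ Δ') (σ : K.obj Δ),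
      Φ Δ' (K.map f σ) = (Φ Δ σ).comp (sMap f.unop)) : K ⟶ TopCat.toSSet.obj Z where
  app Δ := ↾fun σ => (TopCat.toSSetObjEquiv Z Δ).symm (Φ Δ σ)
  naturality Δ Δ' f := by
    ext σ
    change (TopCat.toSSetObjEquiv Z Δ').symm (Φ Δ' (K.map f σ)) = _
    rw [nat]
    rfl

noncomputable def lift {K : SSet.{0}} (Z : TopCat.{0})
    (Φ : ∀ Δ : SimplexCategoryᵒᵖ, K.obj Δ → C(stdSimplex ℝ (Fin (Δ.unop.len+1)), Z))
    (nat : ∀ (Δ Δ' : SimplexCategoryᵒᵖ) (f : Δ ⟶ Δ') (σ : K.obj Δ),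
      Φ Δ' (K.map f σ) = (Φ Δ σ).comp (sMap f.unop)) : SSet.toTop.obj K ⟶ Z :=
  (sSetTopAdj.homEquiv _ _).symm (preLift Z Φ nat)

lemma homEquiv_eta {K : SSet.{0}} {Z : TopCat.{0}} (g : SSet.toTop.obj K ⟶ Z)
    {Δ : SimplexCategoryᵒᵖ} (σ : K.obj Δ) :
    TopCat.toSSetObjEquiv Z Δ ((sSetTopAdj.homEquiv _ _ g).app Δ σ) = g.hom.comp (eta σ) := by
  rw [Adjunction.homEquiv_unit]
  rfl

lemma lift_eta {K : SSet.{0}} (Z : TopCat.{0})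
    (Φ : ∀ Δ : SimplexCategoryᵒᵖ, K.obj Δ → C(stdSimplex ℝ (Fin (Δ.unop.len+1)), Z))
    (nat : ∀ (Δ Δ' : SimplexCategoryᵒᵖ) (f : Δ ⟶ Δ') (σ : K.obj Δ),
      Φ Δ' (K.map f σ) = (Φ Δ σ).comp (sMap f.unop))
    {Δ : SimplexCategoryᵒᵖ} (σ : K.obj Δ) :
    (lift Z Φ nat).hom.comp (eta σ) = Φ Δ σ := by
  rw [← homEquiv_eta]
  unfold lift
  rw [Equiv.apply_symm_apply]
  exact Equiv.apply_symm_apply _ _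

lemma real_ext {K : SSet.{0}} {Z : TopCat.{0}} (g g' : SSet.toTop.obj K ⟶ Z)
    (h : ∀ (Δ : SimplexCategoryᵒᵖ) (σ : K.obj Δ), g.hom.comp (eta σ) = g'.hom.comp (eta σ)) :
    g = g' := by
  apply (sSetTopAdj.homEquiv _ _).injective
  ext Δ σ
  apply (TopCat.toSSetObjEquiv Z Δ).injective
  exact (homEquiv_eta g σ).trans ((h Δ σ).trans (homEquiv_eta g' σ).symm)


set_option linter.unusedSectionVars false

section Poset

variable {Q : Type} [PartialOrder Q]

/-- Vertices of a simplex of the nerve. -/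
def vert {Δ : SimplexCategoryᵒᵖ} (σ : (nerve Q).obj Δ) (i : Fin (Δ.unop.len+1)) : Q :=
  ComposableArrows.obj' σ i.1 (by have := i.2; omega)

lemma vert_mono {Δ : SimplexCategoryᵒᵖ} (σ : (nerve Q).obj Δ) : Monotone (vert σ) := by
  intro i j hij
  exact leOfHom ((show Fin (Δ.unop.len+1) ⥤ Q from σ).map (homOfLE hij))

lemma vert_map {Δ Δ' : SimplexCategoryᵒᵖ} (f : Δ ⟶ Δ') (σ : (nerve Q).obj Δ)
    (i : Fin (Δ'.unop.len+1)) : vert ((nerve Q).map f σ) i = vert σ (f.unop i) := rfl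

lemma nerve_ext {Δ : SimplexCategoryᵒᵖ} {σ σ' : (nerve Q).obj Δ}
    (h : ∀ i, vert σ i = vert σ' i) : σ = σ' := by
  apply nerve.ext_of_isThin
  funext i
  exact h i

/-- Simplex of the nerve from a monotone vertex map. -/
def ofVert (Δ : SimplexCategoryᵒᵖ) (v : Fin (Δ.unop.len+1) → Q) (hv : Monotone v) :
    (nerve Q).obj Δ := (hv.functor : Fin (Δ.unop.len+1) ⥤ Q)

lemma vert_ofVert (Δ : SimplexCategoryᵒᵖ) (v : Fin (Δ.unop.len+1) → Q) (hv : Monotone v) (i) :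
    vert (ofVert Δ v hv) i = v i := rfl

variable (c : Q → Q) (hc : Antitone c)

/-- The reversed simplex. -/
def dual {Δ : SimplexCategoryᵒᵖ} (σ : (nerve Q).obj Δ) : (nerve Q).obj Δ :=
  ofVert Δ (fun i => c (vert σ i.rev))
    (fun _ _ hij => hc (vert_mono σ (Fin.rev_le_rev.2 hij)))

lemma vert_dual {Δ : SimplexCategoryᵒᵖ} (σ : (nerve Q).obj Δ) (i) :
    vert (dual c hc σ) i = c (vert σ i.rev) := rfl

lemma dual_dual (hcc : ∀ q, c (c q) = q) {Δ : SimplexCategoryᵒᵖ} (σ : (nerve Q).obj Δ) :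
    dual c hc (dual c hc σ) = σ := by
  apply nerve_ext
  intro i
  rw [vert_dual, vert_dual, hcc, Fin.rev_rev]

lemma sMap_comp {a b d : ℕ} (f : Fin (a+1) → Fin (b+1)) (g : Fin (b+1) → Fin (d+1)) :
    (sMap g).comp (sMap f) = sMap (g ∘ f) := by
  ext1 x
  exact stdSimplex.map_comp_apply f g x

lemma sMap_id {a : ℕ} : sMap (id : Fin (a+1) → Fin (a+1)) = ContinuousMap.id _ := by
  ext1 x
  exact stdSimplex.map_id_apply x

lemma tau_nat (Δ Δ' : SimplexCategoryᵒᵖ) (f : Δ ⟶ Δ') (σ : (nerve Q).obj Δ) :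
    (eta (dual c hc ((nerve Q).map f σ))).comp (sMap Fin.rev)
      = ((eta (dual c hc σ)).comp (sMap Fin.rev)).comp (sMap f.unop) := by
  have : dual c hc ((nerve Q).map f σ) =
      (nerve Q).map (SimplexCategory.rev.map f.unop).op (dual c hc σ) := by
    apply nerve_ext
    intro i
    change c (vert σ (f.unop i.rev)) = c (vert σ (Fin.rev (SimplexCategory.rev.map f.unop i)))
    have h := SimplexCategory.rev_map_apply f.unop i
    exact congrArg (fun z => c (vert σ z)) ((Fin.rev_rev _).symm.trans (congrArg Fin.rev h.symm))
  rw [this, eta_map]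
  rw [ContinuousMap.comp_assoc, ContinuousMap.comp_assoc]
  congr 1
  refine (sMap_comp _ _).trans (Eq.trans ?_ (sMap_comp _ _).symm)
  congr 1
  funext i
  change SimplexCategory.rev.map f.unop i.rev = Fin.rev (f.unop i)
  refine (SimplexCategory.rev_map_apply f.unop i.rev).trans ?_
  rw [Fin.rev_rev]
  rfl

/-- The involution on the realization. -/
noncomputable def tau : SSet.toTop.obj (nerve Q) ⟶ SSet.toTop.obj (nerve Q) :=
  lift _ (fun _ σ => (eta (dual c hc σ)).comp (sMap Fin.rev)) (tau_nat c hc)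

lemma tau_eta {Δ : SimplexCategoryᵒᵖ} (σ : (nerve Q).obj Δ) :
    (tau c hc).hom.comp (eta σ) = (eta (dual c hc σ)).comp (sMap Fin.rev) :=
  lift_eta _ _ (tau_nat c hc) σ

lemma tau_tau (hcc : ∀ q, c (c q) = q) : tau c hc ≫ tau c hc = 𝟙 _ := by
  apply real_ext
  intro Δ σ
  change ((tau c hc).hom.comp (tau c hc).hom).comp (eta σ) = (ContinuousMap.id _).comp (eta σ)
  rw [ContinuousMap.comp_assoc, tau_eta, ← ContinuousMap.comp_assoc, tau_eta, dual_dual c hc hcc,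
    ContinuousMap.comp_assoc, sMap_comp, ContinuousMap.id_comp]
  have : (Fin.rev ∘ Fin.rev : Fin (Δ.unop.len+1) → _) = id := by funext i; simp
  rw [this, sMap_id, ContinuousMap.comp_id]

variable [Fintype Q]

variable (Q) in
/-- Barycentric coordinates target. -/
def BC : Type := {φ : Q → ℝ // (∀ q, 0 ≤ φ q) ∧ ∑ q, φ q = 1 ∧ IsChain (· ≤ ·) {q | φ q ≠ 0}}

instance : TopologicalSpace (BC Q) := inferInstanceAs (TopologicalSpace (Subtype _))

open Classical in
/-- Barycentric coordinate function of a simplex. -/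
noncomputable def bcf {a : ℕ} (v : Fin (a+1) → Q) (t : Fin (a+1) → ℝ) (q : Q) : ℝ :=
  ∑ i, if v i = q then t i else 0

lemma bcf_sum {a : ℕ} (v : Fin (a+1) → Q) (t : Fin (a+1) → ℝ) : ∑ q, bcf v t q = ∑ i, t i := by
  classical
  unfold bcf
  rw [Finset.sum_comm]
  simp

lemma bcf_nonneg {a : ℕ} (v : Fin (a+1) → Q) (t : Fin (a+1) → ℝ) (ht : ∀ i, 0 ≤ t i) (q : Q) :
    0 ≤ bcf v t q := by
  unfold bcf
  apply Finset.sum_nonneg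
  intro i _
  split_ifs
  · exact ht i
  · rfl

lemma bcf_ne {a : ℕ} (v : Fin (a+1) → Q) (t : Fin (a+1) → ℝ) (q : Q) (h : bcf v t q ≠ 0) :
    ∃ i, v i = q := by
  by_contra hne
  push Not at hne
  apply h
  unfold bcf
  exact Finset.sum_eq_zero fun i _ => if_neg (hne i)

lemma bcf_map {a b : ℕ} (f : Fin (a+1) → Fin (b+1)) (v : Fin (b+1) → Q)
    (t : stdSimplex ℝ (Fin (a+1))) (q : Q) :
    bcf v (stdSimplex.map f t) q = bcf (v ∘ f) t q := by
  classical
  unfold bcf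
  rw [stdSimplex.map_coe]
  simp only [FunOnFinite.linearMap_apply_apply]
  have : ∀ j, (if v j = q then ∑ i with f i = j, t i else 0)
      = ∑ i, if f i = j then (if v (f i) = q then t i else 0) else 0 := by
    intro j
    rw [Finset.sum_filter]
    split_ifs with h
    · apply Finset.sum_congr rfl
      intro i _
      split_ifs with h1 h2 <;> simp_all
    · symm
      apply Finset.sum_eq_zero
      intro i _
      split_ifs with h1 h2 <;> simp_all
  simp only [this]
  rw [Finset.sum_comm]
  simp

/-- Barycentric coordinates on one simplex. -/
noncomputable def bcs {Δ : SimplexCategoryᵒᵖ} (σ : (nerve Q).obj Δ) :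
    C(stdSimplex ℝ (Fin (Δ.unop.len+1)), BC Q) where
  toFun t := ⟨bcf (vert σ) t, bcf_nonneg _ _ t.2.1, (bcf_sum _ _).trans t.2.2, by
    intro p hp q hq _
    obtain ⟨i, rfl⟩ := bcf_ne _ _ _ hp
    obtain ⟨j, rfl⟩ := bcf_ne _ _ _ hq
    rcases le_total i j with h | h
    · exact Or.inl (vert_mono σ h)
    · exact Or.inr (vert_mono σ h)⟩
  continuous_toFun := by
    apply Continuous.subtype_mk
    apply continuous_pi
    intro q
    unfold bcf
    apply continuous_finsetSum
    intro i _
    split_ifs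
    · exact (continuous_apply i).comp continuous_subtype_val
    · exact continuous_const

lemma bcs_nat (Δ Δ' : SimplexCategoryᵒᵖ) (f : Δ ⟶ Δ') (σ : (nerve Q).obj Δ) :
    bcs ((nerve Q).map f σ) = (bcs σ).comp (sMap f.unop) := by
  ext1 t
  apply Subtype.ext
  funext q
  exact (bcf_map f.unop (vert σ) t q).symm

/-- Barycentric coordinates on the realization. -/
noncomputable def bc : SSet.toTop.obj (nerve Q) ⟶ TopCat.of (BC Q) :=
  lift (TopCat.of (BC Q)) (fun _ σ => bcs σ) bcs_nat

lemma bc_eta {Δ : SimplexCategoryᵒᵖ} (σ : (nerve Q).obj Δ) : (bc (Q := Q)).hom.comp (eta σ) = bcs σ :=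
  lift_eta (TopCat.of (BC Q)) (fun _ σ => bcs σ) bcs_nat σ

/-- Induced involution on barycentric coordinates (one coordinate). -/
lemma bc_tau (hcc : ∀ q, c (c q) = q) (x : SSet.toTop.obj (nerve Q)) (q : Q) :
    ((bc (Q := Q)).hom ((tau c hc).hom x)).1 q = ((bc (Q := Q)).hom x).1 (c q) := by
  have hcont : Continuous (fun y : BC Q => y.1 (c q)) :=
    (continuous_apply _).comp continuous_subtype_val
  have hcont' : Continuous (fun y : BC Q => y.1 q) :=
    (continuous_apply _).comp continuous_subtype_val
  let e : TopCat.of (BC Q) ⟶ TopCat.of ℝ := TopCat.ofHom ⟨_, hcont⟩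
  let e' : TopCat.of (BC Q) ⟶ TopCat.of ℝ := TopCat.ofHom ⟨_, hcont'⟩
  have key : tau c hc ≫ bc ≫ e' = bc ≫ e := by
    apply real_ext
    intro Δ σ
    change e'.hom.comp (bc.hom.comp ((tau c hc).hom.comp (eta σ))) = e.hom.comp (bc.hom.comp (eta σ))
    rw [tau_eta, ← ContinuousMap.comp_assoc bc.hom, bc_eta, bc_eta]
    ext1 t
    change bcf (vert (dual c hc σ)) (stdSimplex.map Fin.rev t) q = bcf (vert σ) t (c q)
    rw [bcf_map]
    unfold bcf
    apply Finset.sum_congr rfl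
    intro i _
    have : (vert (dual c hc σ) ∘ Fin.rev) i = c (vert σ i) := by
      simp [vert_dual]
    rw [this]
    have h2 : c (vert σ i) = q ↔ vert σ i = c q :=
      ⟨fun h => by rw [← h, hcc], fun h => by rw [h, hcc]⟩
    classical
    exact if_congr h2 rfl rfl
  exact ConcreteCategory.congr_hom key x

end Poset

end LovaszProof

namespace LovaszProof

lemma retract_subsingleton {A X : Type*} [TopologicalSpace A] [TopologicalSpace X] {N : Type*}
    (i : C(A, X)) (r : C(X, A)) (hri : ∀ a, r (i a) = a) (a : A)
    (h : Subsingleton (HomotopyGroup N X (i a))) : Subsingleton (HomotopyGroup N A a) := by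
  refine ⟨fun p q => ?_⟩
  induction p using Quotient.inductionOn with | _ p => ?_
  induction q using Quotient.inductionOn with | _ q => ?_
  let p' : GenLoop N X (i a) := ⟨i.comp p.1, fun y hy => congrArg i (p.2 y hy)⟩
  let q' : GenLoop N X (i a) := ⟨i.comp q.1, fun y hy => congrArg i (q.2 y hy)⟩
  have h1 : (Quotient.mk (GenLoop.Homotopic.setoid N (i a)) p')
    = Quotient.mk (GenLoop.Homotopic.setoid N (i a)) q' := h.elim _ _
  have h2 : p'.1.HomotopicRel q'.1 (Cube.boundary N) := Quotient.exact h1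
  have h3 := h2.comp_continuousMap r
  have e : ∀ s : GenLoop N A a, r.comp (i.comp s.1) = s.1 := by
    intro s
    ext1 y
    exact hri _
  apply Quotient.sound
  change p.1.HomotopicRel q.1 (Cube.boundary N)
  rw [← e p, ← e q]
  exact h3

section Graph

variable {V : Type} [Fintype V] (G : SimpleGraph V)

open Classical in
/-- Common neighbours. -/
noncomputable def CN (A : Finset V) : Finset V := Finset.univ.filter fun v => ∀ a ∈ A, G.Adj v a

lemma mem_CN {A : Finset V} {v : V} : v ∈ CN G A ↔ ∀ a ∈ A, G.Adj v a := by
  simp [CN]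

lemma CN_anti {A B : Finset V} (h : A ⊆ B) : CN G B ⊆ CN G A := by
  intro v hv
  rw [mem_CN] at *
  exact fun a ha => hv a (h ha)

lemma sub_CN_CN (A : Finset V) : A ⊆ CN G (CN G A) := by
  intro a ha
  rw [mem_CN]
  intro v hv
  exact ((mem_CN G).1 hv a ha).symm

lemma CN_CN_CN (A : Finset V) : CN G (CN G (CN G A)) = CN G A :=
  (CN_anti G (sub_CN_CN G A)).antisymm (sub_CN_CN G _)

/-- Poset of closed sets. -/
def CQ : Type := {A : Finset V // A.Nonempty ∧ (CN G A).Nonempty ∧ CN G (CN G A) = A}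

instance : PartialOrder (CQ G) := Subtype.partialOrder _

instance : Finite (CQ G) := inferInstanceAs (Finite (Subtype _))

noncomputable instance : Fintype (CQ G) := Fintype.ofFinite _

/-- The duality on closed sets. -/
noncomputable def cq (A : CQ G) : CQ G :=
  ⟨CN G A.1, A.2.2.1, by rw [A.2.2.2]; exact A.2.1, CN_CN_CN G A.1⟩

lemma cq_anti : Antitone (cq G) := fun _ _ h => CN_anti G h

lemma cq_cq (A : CQ G) : cq G (cq G A) = A := Subtype.ext A.2.2.2

/-- Inclusion of closed sets. -/
def incl (A : CQ G) : NbhdPoset G :=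
  ⟨A.1, A.2.1, by
    obtain ⟨v, hv⟩ := A.2.2.1
    exact ⟨v, (mem_CN G).1 hv⟩⟩

/-- Closure. -/
noncomputable def clos (A : NbhdPoset G) : CQ G :=
  ⟨CN G (CN G A.1), A.2.1.mono (sub_CN_CN G _), by
    rw [CN_CN_CN]
    obtain ⟨v, hv⟩ := A.2.2
    exact ⟨v, (mem_CN G).2 hv⟩, by rw [CN_CN_CN]⟩

lemma incl_mono : Monotone (incl G) := fun _ _ h => h

lemma clos_mono : Monotone (clos G) := fun _ _ h => CN_anti G (CN_anti G h)

lemma clos_incl (A : CQ G) : clos G (incl G A) = A := Subtype.ext A.2.2.2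

lemma nerve_retract :
    nerveMap (incl_mono G).functor ≫ nerveMap (clos_mono G).functor = 𝟙 (nerve (CQ G)) := by
  ext Δ σ i
  exact clos_incl G _

/-- Inclusion of realizations. -/
noncomputable def inclT : C(SSet.toTop.obj (nerve (CQ G)), nbhdComplex G) :=
  (SSet.toTop.map (nerveMap (incl_mono G).functor)).hom

/-- Retraction of realizations. -/
noncomputable def closT : C(nbhdComplex G, SSet.toTop.obj (nerve (CQ G))) :=
  (SSet.toTop.map (nerveMap (clos_mono G).functor)).hom

lemma closT_inclT (x : SSet.toTop.obj (nerve (CQ G))) : closT G (inclT G x) = x := by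
  have h : SSet.toTop.map (nerveMap (incl_mono G).functor) ≫
      SSet.toTop.map (nerveMap (clos_mono G).functor) = 𝟙 _ := by
    rw [← Functor.map_comp, nerve_retract, CategoryTheory.Functor.map_id]
  exact ConcreteCategory.congr_hom h x

variable {n : ℕ} (c : G.Coloring (Fin (n+1)))

open Classical in
/-- Sign of a colour at a closed set. -/
noncomputable def sgn (i : Fin (n+1)) (A : CQ G) : ℝ :=
  (if ∃ a ∈ A.1, c a = i then 1 else 0) - (if ∃ a ∈ CN G A.1, c a = i then 1 else 0)

lemma sgn_cq (i : Fin (n+1)) (A : CQ G) : sgn G c i (cq G A) = - sgn G c i A := by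
  unfold sgn
  have : CN G (cq G A).1 = A.1 := A.2.2.2
  rw [this]
  change (if ∃ a ∈ CN G A.1, c a = i then (1:ℝ) else 0) - _ = _
  ring

lemma sgn_pos (A : CQ G) (a : V) (ha : a ∈ A.1) : sgn G c (c a) A = 1 := by
  unfold sgn
  rw [if_pos ⟨a, ha, rfl⟩, if_neg]
  · norm_num
  · rintro ⟨b, hb, hbc⟩
    exact c.valid ((mem_CN G).1 hb a ha) hbc

lemma sgn_neg (A : CQ G) (a : V) (ha : a ∈ CN G A.1) : sgn G c (c a) A = -1 := by
  rw [← cq_cq G A, sgn_cq]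
  rw [sgn_pos G c (cq G A) a ha]

/-- Colour coordinate. -/
noncomputable def gfun (i : Fin (n+1)) (y : BC (CQ G)) : ℝ := ∑ A, y.1 A * sgn G c i A

lemma gfun_cont (i : Fin (n+1)) : Continuous (gfun G c i) := by
  unfold gfun
  apply continuous_finsetSum
  intro A _
  exact ((continuous_apply A).comp continuous_subtype_val).mul continuous_const

lemma gfun_odd (i : Fin (n+1)) (y y' : BC (CQ G)) (h : ∀ A, y'.1 A = y.1 (cq G A)) :
    gfun G c i y' = - gfun G c i y := by
  unfold gfun
  rw [← Finset.sum_neg_distrib]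
  refine Fintype.sum_equiv (Function.Involutive.toPerm (cq G) (cq_cq G)) _ _ ?_
  intro A
  change y'.1 A * _ = - (y.1 (cq G A) * sgn G c i (cq G A))
  rw [sgn_cq, h]
  ring

lemma gfun_const (i : Fin (n+1)) (y : BC (CQ G)) (r : ℝ)
    (h : ∀ A, y.1 A ≠ 0 → sgn G c i A = r) : gfun G c i y = r := by
  unfold gfun
  have : ∀ A, y.1 A * sgn G c i A = y.1 A * r := by
    intro A
    by_cases hA : y.1 A = 0
    · rw [hA]; ring
    · rw [h A hA]
  simp only [this]
  rw [← Finset.sum_mul, y.2.2.1, one_mul]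

lemma supp_nonempty (y : BC (CQ G)) : {A | y.1 A ≠ 0}.Nonempty := by
  by_contra hne
  rw [Set.not_nonempty_iff_eq_empty] at hne
  have h := y.2.2.1
  rw [Finset.sum_eq_zero] at h
  · norm_num at h
  · intro A _
    by_contra hA
    have : A ∈ {A | y.1 A ≠ 0} := hA
    rw [hne] at this
    exact this

lemma gfun_one (y : BC (CQ G)) : ∃ i, gfun G c i y = 1 := by
  obtain ⟨A, hA⟩ := (Set.toFinite {A | y.1 A ≠ 0}).exists_minimal (supp_nonempty G y)
  obtain ⟨a, ha⟩ := A.2.1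
  refine ⟨c a, gfun_const G c _ y _ fun B hB => sgn_pos G c B a ?_⟩
  have hAB : A ≤ B := by
    rcases y.2.2.2.total hA.1 hB with h | h
    · exact h
    · exact hA.2 hB h
  exact hAB ha

lemma gfun_neg_one (y : BC (CQ G)) : ∃ i, gfun G c i y = -1 := by
  obtain ⟨A, hA⟩ := (Set.toFinite {A | y.1 A ≠ 0}).exists_maximal (supp_nonempty G y)
  obtain ⟨a, ha⟩ := A.2.2.1
  refine ⟨c a, gfun_const G c _ y _ fun B hB => sgn_neg G c B a ?_⟩
  have hAB : B ≤ A := by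
    rcases y.2.2.2.total hA.1 hB with h | h
    · exact hA.2 hB h
    · exact h
  exact CN_anti G hAB ha

lemma gfun_big (y : BC (CQ G)) :
    ∃ i : Fin n, 1 ≤ |gfun G c i.castSucc y - gfun G c (Fin.last n) y| := by
  obtain ⟨i, hi⟩ := gfun_one G c y
  obtain ⟨j, hj⟩ := gfun_neg_one G c y
  rcases le_total (gfun G c (Fin.last n) y) 0 with h | h
  · have hne : i ≠ Fin.last n := by
      rintro rfl
      linarith
    obtain ⟨i', rfl⟩ := Fin.exists_castSucc_eq.2 hne
    refine ⟨i', le_abs.2 (Or.inl ?_)⟩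
    linarith
  · have hne : j ≠ Fin.last n := by
      rintro rfl
      linarith
    obtain ⟨i', rfl⟩ := Fin.exists_castSucc_eq.2 hne
    refine ⟨i', le_abs.2 (Or.inr ?_)⟩
    linarith

theorem main_aux (c : G.Coloring (Fin (n+1))) (hne : Nonempty (nbhdComplex G))
    (hX : ∀ j < n, ∀ x : nbhdComplex G, Subsingleton (HomotopyGroup (Fin j) (nbhdComplex G) x)) :
    False := by
  obtain ⟨p0⟩ := hne
  have htt : ∀ x, (tau (cq G) (cq_anti G)).hom ((tau (cq G) (cq_anti G)).hom x) = x := fun x =>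
    ConcreteCategory.congr_hom (tau_tau (cq G) (cq_anti G) (cq_cq G)) x
  obtain ⟨f, hf, hfo⟩ := eqMap_all (tau (cq G) (cq_anti G)).hom
    (tau (cq G) (cq_anti G)).hom.continuous htt (closT G p0) n
    (fun j hj x => retract_subsingleton (inclT G) (closT G) (closT_inclT G) x (hX j hj _))
  let g : Fin (n+1) → SSet.toTop.obj (nerve (CQ G)) → ℝ := fun i x => gfun G c i (bc.hom x)
  have hg : ∀ i, Continuous (g i) := fun i => (gfun_cont G c i).comp bc.hom.continuous
  have hgo : ∀ i x, g i ((tau (cq G) (cq_anti G)).hom x) = - g i x := fun i x =>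
    gfun_odd G c i _ _ fun A => bc_tau (cq G) (cq_anti G) (cq_cq G) x A
  refine borsuk_ulam n (fun x i => g i.castSucc (f x) - g (Fin.last n) (f x)) ?_ ?_ ?_
  · apply continuousOn_pi.2
    intro i
    exact ((hg _).comp_continuousOn hf).sub ((hg _).comp_continuousOn hf)
  · intro x hx
    funext i
    simp only [Pi.neg_apply]
    rw [hfo x hx, hgo, hgo]
    ring
  · intro x _
    exact gfun_big G c _

end Graph

end LovaszProof

/-- **Lovász' theorem**: if the neighborhood complex of a finite simple graph `G` is
`k`-connected for some integer `k ≥ -1`, then `χ(G) ≥ k + 3`. -/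
theorem lovasz_neighborhood_complex {V : Type} [Fintype V] (G : SimpleGraph V)
    (k : ℤ) (hk : -1 ≤ k) (hconn : KConnected k (nbhdComplex G)) :
    ((k + 3).toNat : ℕ∞) ≤ G.chromaticNumber := by
  rw [SimpleGraph.le_chromaticNumber_iff_colorable]
  intro m hm
  by_contra hlt
  push Not at hlt
  have hlt' : m < (k + 3).toNat := by exact_mod_cast hlt
  obtain ⟨n, rfl⟩ : ∃ n : ℕ, k = (n : ℤ) - 1 := ⟨(k + 1).toNat, by omega⟩
  obtain ⟨c⟩ := hm.mono (show m ≤ n + 1 by omega)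
  exact LovaszProof.main_aux G c hconn.1 (fun j hj x => hconn.2 j (by omega) x)
end
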